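/- Let s ∈ (1/2,1) and let N > 2s be a positive integer. Let Ω ⊂ ℝ^N be a bounded open set of class C^{1,1}, and let f : ℝ^N × ℝ → ℝ be locally β-Hölder continuous for some β ∈ (0,1). Let u be a weak solution of (−Δ)^s u = f(·,u) in Ω with u = 0 in ℝ^N∖Ω, differentiable at every point of Ω. For each x ∈ Ω let G(x,·) be a Green function of (−Δ)^s in Ω with pole at x such that z ↦ G(x,z) is differentiable on Ω∖{x}, with the uniform gradient bound sup_{x∈Ω} ∫_Ω |∇_z G(x,z)| dz < ∞, and assume the fractional normal traces γ_0^s(u) and γ_0^s(G(x,·)) exist as continuous functions on ∂Ω. If moreover γ_0^s(u) ≡ 0 on ∂Ω, then ∇u is bounded on Ω, i.e. sup_{x∈Ω} |∇u(x)| < ∞. -/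

import Mathlib

open MeasureTheory Real Filter Metric

noncomputable section

/-- Euclidean space `ℝ^N`. -/
abbrev Euc (N : ℕ) := EuclideanSpace ℝ (Fin N)

/-- The normalizing constant `c_{N,s}` of the fractional Laplacian. -/
def cNs (N : ℕ) (s : ℝ) : ℝ :=
  Real.pi ^ ((N : ℝ) / 2) * s * (4 : ℝ) ^ s * Real.Gamma (((N : ℝ) + 2 * s) / 2) /
    Real.Gamma (1 - s)

/-- The constant `b_{N,s}` of the fundamental solution. -/
def bNs (N : ℕ) (s : ℝ) : ℝ :=
  Real.pi ^ (-(N : ℝ) / 2) * (4 : ℝ) ^ (-s) * Real.Gamma (((N : ℝ) - 2 * s) / 2) /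
    Real.Gamma s

/-- The fractional Laplacian `(-Δ)^s u (x)`, via the absolutely convergent
symmetrized integral `-(c_{N,s}/2) ∫ (u(x+h)+u(x-h)-2u(x))/|h|^{N+2s} dh`. -/
def fracLap (N : ℕ) (s : ℝ) (u : Euc N → ℝ) (x : Euc N) : ℝ :=
  -(cNs N s / 2) * ∫ h : Euc N, (u (x + h) + u (x - h) - 2 * u x) / ‖h‖ ^ ((N : ℝ) + 2 * s)

/-- `φ ∈ C_c^∞(Ω)`. -/
def IsTestFn (N : ℕ) (Ω : Set (Euc N)) (φ : Euc N → ℝ) : Prop :=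
  ContDiff ℝ (⊤ : ℕ∞) φ ∧ HasCompactSupport φ ∧ tsupport φ ⊆ Ω

/-- The signed distance `δ̄(z) = dist(z, Ωᶜ) - dist(z, Ω)`. -/
def signedDistSet (N : ℕ) (Ω : Set (Euc N)) (z : Euc N) : ℝ :=
  Metric.infDist z Ωᶜ - Metric.infDist z Ω

/-- A bounded open set of class `C^{1,1}`: the signed distance is differentiable with
Lipschitz gradient on a neighborhood of `∂Ω`. -/
def IsC11 (N : ℕ) (Ω : Set (Euc N)) : Prop :=
  IsOpen Ω ∧ Bornology.IsBounded Ω ∧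
    ∃ U : Set (Euc N), IsOpen U ∧ frontier Ω ⊆ U ∧
      (∀ z ∈ U, DifferentiableAt ℝ (signedDistSet N Ω) z) ∧
      ∃ K : NNReal, LipschitzOnWith K (fun z => gradient (signedDistSet N Ω) z) U

/-- `δ(z) = dist(z, ∂Ω)`. -/
def bdist (N : ℕ) (Ω : Set (Euc N)) (z : Euc N) : ℝ := Metric.infDist z (frontier Ω)

/-- The outward unit normal `ν = -∇δ̄` (meaningful on `∂Ω`). -/
def outNormal (N : ℕ) (Ω : Set (Euc N)) (θ : Euc N) : Euc N :=
  -gradient (signedDistSet N Ω) θ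

/-- The surface measure on `∂Ω`: the `(N-1)`-dimensional Hausdorff measure
restricted to `∂Ω`. -/
def surf (N : ℕ) (Ω : Set (Euc N)) : Measure (Euc N) :=
  (μH[(N : ℝ) - 1]).restrict (frontier Ω)

/-- `g` is the fractional normal trace `γ_0^s(w)` on `∂Ω`. -/
def HasFracTrace (N : ℕ) (s : ℝ) (Ω : Set (Euc N)) (w g : Euc N → ℝ) : Prop :=
  ContinuousOn g (frontier Ω) ∧
    ∀ θ ∈ frontier Ω,
      Filter.Tendsto (fun z => w z / bdist N Ω z ^ s) (nhdsWithin θ Ω) (nhds (g θ))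

/-- `G` is a Green function of `(-Δ)^s` in `Ω` with pole at `x`, with constant `C`
in the Green function estimate. -/
def IsGreenFn (N : ℕ) (s : ℝ) (Ω : Set (Euc N)) (C : ℝ) (x : Euc N) (G : Euc N → ℝ) : Prop :=
  Integrable G ∧ (∀ z, z ∉ Ω → G z = 0) ∧
    (∀ φ, IsTestFn N Ω φ → ∫ z in Ω, G z * fracLap N s φ z = φ x) ∧
    ∀ z, z ≠ x → 0 ≤ G z ∧
      G z ≤ C * min (‖x - z‖ ^ (2 * s - (N : ℝ)))
        (bdist N Ω x ^ s * bdist N Ω z ^ s * ‖x - z‖ ^ (-(N : ℝ)))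

/-- The quadratic form `E_s(u,v)` associated with `(-Δ)^s`. -/
def Es (N : ℕ) (s : ℝ) (u v : Euc N → ℝ) : ℝ :=
  (cNs N s / 2) *
    ∫ p : Euc N × Euc N, (u p.1 - u p.2) * (v p.1 - v p.2) / ‖p.1 - p.2‖ ^ ((N : ℝ) + 2 * s)

/-- `u` is a weak solution of `(-Δ)^s u = f(·,u)` in `Ω`, `u = 0` outside `Ω`. -/
def IsWeakSolution (N : ℕ) (s : ℝ) (Ω : Set (Euc N)) (f : Euc N → ℝ → ℝ) (u : Euc N → ℝ) :
    Prop :=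
  (∃ C : NNReal, HolderWith C s.toNNReal u) ∧ (∀ z, z ∉ Ω → u z = 0) ∧
    ∀ φ, IsTestFn N Ω φ → Es N s u φ = ∫ z in Ω, f z (u z) * φ z

/-- Locally `β`-Hölder continuous function. -/
def LocHolder {X : Type*} [PseudoEMetricSpace X] (β : ℝ) (f : X → ℝ) : Prop :=
  ∀ p : X, ∃ t ∈ nhds p, ∃ C : NNReal, HolderOnWith C β.toNNReal f t

/-!
The value `∂_e u(x)` is recovered by testing the Green representation at `x` with
`φ_ρ = (1_{d > 3ρ} u) ⋆ ∂_e κ_ρ`, where `d` is the distance to `Ωᶜ` and `κ_ρ` a mollifier at scale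
`ρ`: this is an admissible test function, and `φ_ρ(x) → ∂_e u(x)` as `ρ → 0`.

Up to an error, `(-Δ)^s φ_ρ` equals `∂_e H_ρ` with `H_ρ = (1_{d > 5ρ} g) ⋆ κ_ρ` and `g = f(·, u)`.
Since `2s > 1`, the pole of the Green function `Γ` is weak enough to integrate by parts across it,
so `|∫ Γ ∂_e H_ρ| = |∫ H_ρ ∂_e Γ|` is at most `sup |g| * ∫ |∇Γ|`, uniformly in `ρ`.

The error is where the vanishing trace enters. Where `d > 6ρ` it comes from truncating `u` alone,
and elsewhere it is bounded by crude estimates on the scale `ρ`. If `|u| ≤ τ d^s` near the boundary,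
then, because `Γ ≲ d^s` away from the pole and the collar `{d ≤ ρ}` has volume `O(ρ)`, the error
tested against `Γ` is at most a constant times `τ` for all small `ρ`. Letting `ρ → 0` and then
`τ → 0` gives `|∇u(x)| ≤ sup |g| * ∫ |∇Γ|`.
-/

section Kernels

open Module

variable {E : Type*} [NormedAddCommGroup E]

/-- The decaying kernel `y ↦ (ρ + ‖y‖)^{-r}`, the envelope at scale `ρ` of fractional Laplacians of
mollifiers. -/
def decayKernel (r ρ : ℝ) (y : E) : ℝ := (ρ + ‖y‖) ^ (-r)

/-- The weight `min(‖h‖^p, 1) / ‖h‖^b`, which controls a singular kernel of order `b` applied to a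
difference of order `p` of a bounded function. -/
def truncatedWeight (p b : ℝ) (h : E) : ℝ := min (‖h‖ ^ p) 1 / ‖h‖ ^ b

lemma decayKernel_nonneg {ρ : ℝ} (hρ : 0 < ρ) (r : ℝ) (y : E) : 0 ≤ decayKernel r ρ y := by
  unfold decayKernel; positivity

lemma continuous_decayKernel {ρ : ℝ} (hρ : 0 < ρ) (r : ℝ) :
    Continuous (decayKernel r ρ : E → ℝ) :=
  (continuous_const.add continuous_norm).rpow_const fun _ =>
    Or.inl (add_pos_of_pos_of_nonneg hρ (norm_nonneg _)).ne'

lemma rpow_mul_decayKernel_le {ρ c D t : ℝ} (hρ : 0 < ρ) (hc : 0 ≤ c) (hD : 0 ≤ D) (ht : 0 ≤ t)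
    (r : ℝ) {y : E} (h : D ≤ c * (ρ + ‖y‖)) :
    D ^ t * decayKernel r ρ y ≤ c ^ t * decayKernel (r - t) ρ y := by
  have hpos : 0 < ρ + ‖y‖ := by positivity
  calc D ^ t * decayKernel r ρ y
      ≤ (c * (ρ + ‖y‖)) ^ t * decayKernel r ρ y := by
        have := decayKernel_nonneg hρ r y
        gcongr
    _ = c ^ t * decayKernel (r - t) ρ y := by
        rw [decayKernel, decayKernel, Real.mul_rpow hc hpos.le, mul_assoc, ← Real.rpow_add hpos]
        ring_nf

lemma truncatedWeight_nonneg (p b : ℝ) (h : E) : 0 ≤ truncatedWeight p b h := by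
  unfold truncatedWeight; positivity

variable [NormedSpace ℝ E]

lemma decayKernel_eq_smul {ρ : ℝ} (hρ : 0 < ρ) (r : ℝ) (y : E) :
    decayKernel r ρ y = ρ ^ (-r) * decayKernel r 1 (ρ⁻¹ • y) := by
  rw [decayKernel, decayKernel, ← Real.mul_rpow hρ.le (by positivity), norm_smul, norm_inv,
    Real.norm_of_nonneg hρ.le]
  field_simp

variable [FiniteDimensional ℝ E] [MeasurableSpace E] [BorelSpace E] (μ : Measure E)
  [μ.IsAddHaarMeasure]

lemma integrable_decayKernel {r ρ : ℝ} (hr : finrank ℝ E < r) (hρ : 0 < ρ) :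
    Integrable (decayKernel r ρ) μ := by
  simp_rw [funext (decayKernel_eq_smul (E := E) hρ r)]
  exact ((integrable_one_add_norm hr).comp_smul (inv_ne_zero hρ.ne')).const_mul _

lemma integral_decayKernel (r : ℝ) {ρ : ℝ} (hρ : 0 < ρ) :
    ∫ y, decayKernel r ρ y ∂μ = ρ ^ (finrank ℝ E - r) * ∫ y, decayKernel r 1 y ∂μ := by
  simp_rw [decayKernel_eq_smul hρ r]
  rw [integral_const_mul, Measure.integral_comp_inv_smul_of_nonneg μ (decayKernel r 1) hρ.le,
    smul_eq_mul, ← mul_assoc, ← Real.rpow_natCast, ← Real.rpow_add hρ, neg_add_eq_sub]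

lemma integrable_truncatedWeight [Nontrivial E] {p b : ℝ} (hb : finrank ℝ E < b)
    (hp : b < finrank ℝ E + p) : Integrable (truncatedWeight p b) μ := by
  have radial : ∀ y : ℝ, 0 < y → min (y ^ p) 1 * y ^ (finrank ℝ E - 1 - b) =
      y ^ (finrank ℝ E - 1) • (min (y ^ p) 1 / y ^ b) := fun y hy => by
    rw [Real.rpow_sub hy, ← Nat.cast_pred finrank_pos, Real.rpow_natCast, smul_eq_mul]
    ring
  refine (integrable_fun_norm_addHaar μ (f := fun y : ℝ => min (y ^ p) 1 / y ^ b)).2 ?_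
  rw [← Set.Ioc_union_Ioi_eq_Ioi (zero_le_one' ℝ), integrableOn_union]
  constructor
  · have near : IntegrableOn (fun y : ℝ => y ^ (p + (finrank ℝ E - 1 - b))) (Set.Ioc 0 1) := by
      rw [← intervalIntegrable_iff_integrableOn_Ioc_of_le zero_le_one]
      exact intervalIntegral.intervalIntegrable_rpow' (by linarith)
    refine near.congr_fun (fun y hy => ?_) measurableSet_Ioc
    rw [← radial y hy.1, min_eq_left (Real.rpow_le_one hy.1.le hy.2 (by linarith)),
      ← Real.rpow_add hy.1]
  · have far : IntegrableOn (fun y : ℝ => y ^ (finrank ℝ E - 1 - b)) (Set.Ioi 1) :=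
      integrableOn_Ioi_rpow_of_lt (by linarith) one_pos
    refine far.congr_fun (fun y (hy : 1 < y) => ?_) measurableSet_Ioi
    rw [← radial y (by linarith), min_eq_right (Real.one_le_rpow hy.le (by linarith)), one_mul]

end Kernels

section SecondDifferences

variable {E : Type*} [NormedAddCommGroup E]

/-- The symmetric second difference of `k` at `z` in direction `h`, which `fracLap` integrates
against `‖h‖^{-(N+2s)}`. -/
def secondDiff (k : E → ℝ) (z h : E) : ℝ := k (z + h) + k (z - h) - 2 * k z

lemma abs_secondDiff_le_of_bound {k : E → ℝ} {B : ℝ} (hB : ∀ y, |k y| ≤ B) (z h : E) :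
    |secondDiff k z h| ≤ 4 * B := by
  have hp := abs_le.1 (hB (z + h))
  have hm := abs_le.1 (hB (z - h))
  have h0 := abs_le.1 (hB z)
  rw [secondDiff, abs_le]
  constructor <;> linarith

variable [NormedSpace ℝ E]

lemma norm_taylor_one_le {F : Type*} [NormedAddCommGroup F] [NormedSpace ℝ F] {f : E → F}
    {L : NNReal} (hf : Differentiable ℝ f) (hL : LipschitzWith L (fderiv ℝ f)) (z h : E) :
    ‖f (z + h) - f z - fderiv ℝ f z h‖ ≤ L * ‖h‖ ^ 2 := by
  have close : ∀ y ∈ closedBall z ‖h‖, ‖fderiv ℝ f y - fderiv ℝ f z‖ ≤ L * ‖h‖ := fun y hy => by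
    rw [← dist_eq_norm]
    exact (hL.dist_le_mul y z).trans (by gcongr; exact hy)
  have := (convex_closedBall z ‖h‖).norm_image_sub_le_of_norm_hasFDerivWithin_le'
    (fun y _ => (hf y).hasFDerivAt.hasFDerivWithinAt) close (x := z) (y := z + h)
    (by simp) (by simp)
  simpa [mul_assoc, sq] using this

lemma abs_secondDiff_le_of_lipschitz {k : E → ℝ} {L : NNReal} (hk : Differentiable ℝ k)
    (hL : LipschitzWith L (fderiv ℝ k)) (z h : E) : |secondDiff k z h| ≤ 2 * L * ‖h‖ ^ 2 := by
  have hp := abs_le.1 (norm_taylor_one_le hk hL z h)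
  have hm := abs_le.1 (norm_taylor_one_le hk hL z (-h))
  simp only [norm_neg, map_neg, ← sub_eq_add_neg] at hm
  rw [secondDiff, abs_le]
  constructor <;> linarith

lemma exists_abs_secondDiff_div_le {k : E → ℝ} (hk : ContDiff ℝ 2 k) (hc : HasCompactSupport k) :
    ∃ C, 0 ≤ C ∧ ∀ (b : ℝ) (z h : E),
      |secondDiff k z h / ‖h‖ ^ b| ≤ C * truncatedWeight 2 b h := by
  obtain ⟨L, hL⟩ := (hk.fderiv_right (m := 1) (by norm_num)).lipschitzWith_of_hasCompactSupport
    (hc.fderiv (𝕜 := ℝ)) one_ne_zero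
  obtain ⟨B, hB⟩ := hc.exists_bound_of_continuous hk.continuous
  have hB0 : 0 ≤ B := (norm_nonneg _).trans (hB 0)
  refine ⟨2 * L + 4 * B, by positivity, fun b z h => ?_⟩
  rw [abs_div, abs_of_nonneg (by positivity : 0 ≤ ‖h‖ ^ b), truncatedWeight, ← mul_div_assoc]
  gcongr
  rw [mul_min_of_nonneg _ _ (by positivity), le_min_iff, Real.rpow_two, mul_one]
  constructor
  · refine (abs_secondDiff_le_of_lipschitz (hk.differentiable two_ne_zero) hL z h).trans ?_
    gcongr
    linarith
  · refine (abs_secondDiff_le_of_bound hB z h).trans ?_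
    have := L.coe_nonneg
    linarith

variable [FiniteDimensional ℝ E] [MeasurableSpace E] [BorelSpace E]

lemma measurable_secondDiff_div {k : E → ℝ} (hk : Continuous k) (b : ℝ) :
    Measurable fun p : E × E => secondDiff k p.1 p.2 / ‖p.2‖ ^ b := by
  have hd : Continuous fun p : E × E => secondDiff k p.1 p.2 := by unfold secondDiff; fun_prop
  exact hd.measurable.div (by fun_prop)

lemma integrable_prod_mul_secondDiff_div [Nontrivial E] (μ : Measure E) [μ.IsAddHaarMeasure]
    {k w : E → ℝ} {T : E → E} {b : ℝ} (hb : Module.finrank ℝ E < b)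
    (hb2 : b < Module.finrank ℝ E + 2) (hk : ContDiff ℝ 2 k) (hc : HasCompactSupport k)
    (hw : Integrable w μ) (hT : Measurable T) :
    Integrable (fun p : E × E => w p.1 * (secondDiff k (T p.1) p.2 / ‖p.2‖ ^ b)) (μ.prod μ) := by
  obtain ⟨C, hC0, hC⟩ := exists_abs_secondDiff_div_le hk hc
  refine (hw.mul_prod ((integrable_truncatedWeight μ hb hb2).const_mul C)).mono ?_ ?_
  · exact hw.aestronglyMeasurable.comp_fst.mul ((measurable_secondDiff_div hk.continuous b).comp
      (by fun_prop : Measurable fun p : E × E => (T p.1, p.2))).aestronglyMeasurable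
  · refine Eventually.of_forall fun p => ?_
    simp only [norm_mul _ (_ : ℝ)]
    gcongr
    rw [← norm_mul, Real.norm_of_nonneg (mul_nonneg hC0 (truncatedWeight_nonneg _ _ _))]
    exact hC b _ _

end SecondDifferences

section FractionalLaplacian

open ContinuousLinearMap (mul)
open scoped Convolution

variable {N : ℕ} {s : ℝ}

lemma fracLap_eq_integral_secondDiff (k : Euc N → ℝ) (z : Euc N) :
    fracLap N s k z = -(cNs N s / 2) * ∫ h : Euc N, secondDiff k z h / ‖h‖ ^ (N + 2 * s) :=
  rfl

lemma measurable_fracLap {k : Euc N → ℝ} (hk : Continuous k) : Measurable (fracLap N s k) :=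
  ((measurable_secondDiff_div hk _).stronglyMeasurable.integral_prod_right'
    (ν := volume)).measurable.const_mul _

lemma fracLap_comp_sub_left (k : Euc N → ℝ) (z y : Euc N) :
    fracLap N s (fun y => k (z - y)) y = fracLap N s k (z - y) := by
  unfold fracLap
  congr 2
  funext h
  beta_reduce
  rw [← sub_sub, sub_sub_eq_add_sub, add_sub_right_comm z h y, add_comm (k (z - y - h))]

lemma fracLap_const_mul_comp_smul (k : Euc N → ℝ) {ρ : ℝ} (hρ : 0 < ρ) (c : ℝ) (y : Euc N) :
    fracLap N s (fun y => c * k (ρ⁻¹ • y)) y = c * ρ ^ (-(2 * s)) * fracLap N s k (ρ⁻¹ • y) := by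
  have scaled : ∀ h : Euc N, secondDiff (fun y => c * k (ρ⁻¹ • y)) y h / ‖h‖ ^ (N + 2 * s) =
      c * ρ ^ (-(N + 2 * s)) *
        (secondDiff k (ρ⁻¹ • y) (ρ⁻¹ • h) / ‖ρ⁻¹ • h‖ ^ (N + 2 * s)) := fun h => by
    rw [norm_smul, norm_inv, Real.norm_of_nonneg hρ.le, Real.mul_rpow (by positivity)
      (by positivity), Real.rpow_neg hρ.le, Real.inv_rpow hρ.le, secondDiff, secondDiff, smul_add,
      smul_sub]
    have : ρ ^ (N + 2 * s) ≠ 0 := by positivity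
    field_simp
  have exponent : ρ ^ (-(N + 2 * s)) * ρ ^ N = ρ ^ (-(2 * s)) := by
    rw [← Real.rpow_natCast ρ N, ← Real.rpow_add hρ]
    ring_nf
  simp_rw [fracLap_eq_integral_secondDiff, scaled]
  rw [integral_const_mul, Measure.integral_comp_inv_smul_of_nonneg volume
    (fun h => secondDiff k (ρ⁻¹ • y) h / ‖h‖ ^ (N + 2 * s)) hρ.le, finrank_euclideanSpace_fin,
    smul_eq_mul, ← exponent]
  ring

lemma secondDiff_convolution {k w : Euc N → ℝ} (hk : Continuous k) (hc : HasCompactSupport k)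
    (hw : Integrable w) (z h : Euc N) :
    secondDiff (w ⋆[mul ℝ ℝ] k) z h = ∫ y, w y * secondDiff k (z - y) h := by
  have hi : ∀ a, Integrable fun y => w y * k (a - y) := fun a =>
    hc.convolutionExists_right (ContinuousLinearMap.mul ℝ ℝ) hw.locallyIntegrable hk a
  simp only [secondDiff, convolution_def, ContinuousLinearMap.mul_apply']
  rw [← integral_const_mul, ← integral_add (hi _) (hi _)]
  refine (integral_sub ((hi _).add (hi _)) ((hi _).const_mul 2)).symm.trans ?_
  congr 1
  funext y
  simp only [Pi.add_apply]
  rw [add_sub_right_comm z h y, sub_right_comm z h]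
  ring

lemma abs_fracLap_le_of_two_le (hs : 0 ≤ s) {k : Euc N → ℝ} (hk : Continuous k)
    (hsupp : Function.support k ⊆ closedBall 0 1) {y : Euc N} (hy : 2 ≤ ‖y‖) :
    |fracLap N s k y| ≤
      |cNs N s / 2| * (2 * 4 ^ (N + 2 * s) * ∫ h, |k h|) * decayKernel (N + 2 * s) 1 y := by
  set b : ℝ := N + 2 * s
  set c : ℝ := 4 ^ b * decayKernel b 1 y
  have zero_of_gt : ∀ w : Euc N, 1 < ‖w‖ → k w = 0 := fun w hw => by
    by_contra h
    exact absurd (mem_closedBall_zero_iff.1 (hsupp h)) hw.not_ge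
  have weight : ∀ h w : Euc N, ‖y‖ ≤ ‖h‖ + ‖w‖ → |k w| / ‖h‖ ^ b ≤ c * |k w| := fun h w hw => by
    rcases le_or_gt ‖w‖ 1 with hw1 | hw1
    · have : ((1 + ‖y‖) / 4) ^ b ≤ ‖h‖ ^ b := by gcongr; linarith
      rw [div_eq_mul_inv, mul_comm]
      gcongr
      calc (‖h‖ ^ b)⁻¹ ≤ (((1 + ‖y‖) / 4) ^ b)⁻¹ := by gcongr
        _ = c := by
          rw [Real.div_rpow (by positivity) (by norm_num), inv_div, div_eq_mul_inv,
            ← Real.rpow_neg (by positivity)]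
          rfl
    · simp [zero_of_gt w hw1]
  have pointwise : ∀ h,
      ‖secondDiff k y h / ‖h‖ ^ b‖ ≤ c * (|k (y + h)| + |k (y - h)|) := fun h => by
    rw [secondDiff, zero_of_gt y (by linarith), mul_zero, sub_zero, norm_div,
      Real.norm_of_nonneg (by positivity : 0 ≤ ‖h‖ ^ b), mul_add]
    refine le_trans ?_ (add_le_add (weight h (y + h) ?_) (weight h (y - h) ?_))
    · rw [← add_div]
      gcongr
      exact abs_add_le _ _
    · simpa [add_comm] using norm_sub_le (y + h) h
    · simpa using norm_add_le h (y - h)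
  have hi : Integrable fun h => |k h| := ((hk.integrable_of_hasCompactSupport
    (.of_support_subset_isCompact (isCompact_closedBall 0 1) hsupp))).abs
  rw [fracLap_eq_integral_secondDiff, abs_mul, abs_neg, mul_assoc]
  gcongr
  refine (norm_integral_le_of_norm_le (((hi.comp_add_left y).add (hi.comp_sub_left y)).const_mul c)
    (Eventually.of_forall pointwise)).trans_eq ?_
  rw [integral_const_mul]
  simp only [Pi.add_apply]
  rw [integral_add (hi.comp_add_left y) (hi.comp_sub_left y),
    integral_add_left_eq_self (fun h => |k h|), integral_sub_left_eq_self (fun h => |k h|)]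
  simp only [c]
  ring

variable [NeZero N]

lemma fracLap_convolution (hs : 0 < s) (hs1 : s < 1) {k w : Euc N → ℝ} (hk : ContDiff ℝ 2 k)
    (hc : HasCompactSupport k) (hw : Integrable w) :
    fracLap N s (w ⋆[mul ℝ ℝ] k) = w ⋆[mul ℝ ℝ] fracLap N s k := by
  funext z
  simp_rw [convolution_def, ContinuousLinearMap.mul_apply', fracLap_eq_integral_secondDiff,
    mul_left_comm (w _), integral_const_mul, ← integral_const_mul (w _)]
  rw [integral_integral_swap (integrable_prod_mul_secondDiff_div volume (by simp [hs])
    (by simp; linarith) hk hc hw (measurable_const.sub measurable_id))]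
  simp_rw [secondDiff_convolution hk.continuous hc hw, ← mul_div_assoc, integral_div]

lemma exists_abs_fracLap_le (hs : 0 < s) (hs1 : s < 1) {k : Euc N → ℝ} (hk : ContDiff ℝ 2 k)
    (hc : HasCompactSupport k) : ∃ C, 0 ≤ C ∧ ∀ y, |fracLap N s k y| ≤ C := by
  obtain ⟨C, hC0, hC⟩ := exists_abs_secondDiff_div_le hk hc
  have hW : Integrable (truncatedWeight 2 (N + 2 * s) : Euc N → ℝ) :=
    integrable_truncatedWeight volume (by simp [hs]) (by simp; linarith)
  refine ⟨|cNs N s / 2| * ∫ h : Euc N, C * truncatedWeight 2 (N + 2 * s) h, ?_, fun y => ?_⟩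
  · exact mul_nonneg (abs_nonneg _)
      (integral_nonneg fun h => mul_nonneg hC0 (truncatedWeight_nonneg _ _ h))
  · rw [fracLap_eq_integral_secondDiff, abs_mul, abs_neg]
    gcongr
    rw [← Real.norm_eq_abs]
    refine norm_integral_le_of_norm_le (hW.const_mul C) (Eventually.of_forall fun h => ?_)
    exact hC _ y h

lemma exists_abs_fracLap_le_decayKernel (hs : 0 < s) (hs1 : s < 1) {k : Euc N → ℝ}
    (hk : ContDiff ℝ 2 k) (hsupp : Function.support k ⊆ closedBall 0 1) :
    ∃ C, 0 ≤ C ∧ ∀ y, |fracLap N s k y| ≤ C * decayKernel (N + 2 * s) 1 y := by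
  obtain ⟨A, hA0, hA⟩ := exists_abs_fracLap_le hs hs1 hk
    (.of_support_subset_isCompact (isCompact_closedBall 0 1) hsupp)
  set b : ℝ := N + 2 * s
  have hK : ∀ y : Euc N, 0 ≤ decayKernel b 1 y := decayKernel_nonneg one_pos b
  have hI : 0 ≤ |cNs N s / 2| * (2 * 4 ^ b * ∫ h, |k h|) :=
    mul_nonneg (abs_nonneg _) (mul_nonneg (by positivity) (integral_nonneg fun _ => abs_nonneg _))
  refine ⟨A * 3 ^ b + |cNs N s / 2| * (2 * 4 ^ b * ∫ h, |k h|), by positivity, fun y => ?_⟩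
  rw [add_mul]
  rcases le_total 2 ‖y‖ with hy | hy
  · exact (abs_fracLap_le_of_two_le hs.le hk.continuous hsupp hy).trans
      (le_add_of_nonneg_left (mul_nonneg (by positivity) (hK y)))
  · refine (hA y).trans (le_add_of_le_of_nonneg ?_ (mul_nonneg hI (hK y)))
    have : 1 ≤ 3 ^ b * decayKernel b 1 y := by
      rw [decayKernel, Real.rpow_neg (by positivity), ← div_eq_mul_inv,
        ← Real.div_rpow (by norm_num) (by positivity)]
      refine Real.one_le_rpow ?_ (by positivity)
      rw [le_div_iff₀ (by positivity)]
      linarith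
    rw [mul_assoc]
    exact le_mul_of_one_le_right hA0 this

end FractionalLaplacian

section WeakSolutions

section DifferenceQuotients

variable {E : Type*} [NormedAddCommGroup E]

lemma exists_abs_diff_mul_diff_le {u φ : E → ℝ} {Bu Bφ : ℝ} {Cu Cφ r : NNReal}
    (hBu : ∀ y, |u y| ≤ Bu) (hBφ : ∀ y, |φ y| ≤ Bφ) (hu : HolderWith Cu r u)
    (hφ : LipschitzWith Cφ φ) :
    ∃ D, 0 ≤ D ∧ ∀ y h : E,
      |(u y - u (y + h)) * (φ y - φ (y + h))| ≤ D * min (‖h‖ ^ (1 + r : ℝ)) 1 := by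
  have hBu0 : 0 ≤ Bu := (abs_nonneg _).trans (hBu 0)
  have hBφ0 : 0 ≤ Bφ := (abs_nonneg _).trans (hBφ 0)
  refine ⟨Cu * Cφ + (2 * Bu) * (2 * Bφ), by positivity, fun y h => ?_⟩
  have osc : ∀ {w : E → ℝ} {B : ℝ}, (∀ y, |w y| ≤ B) → |w y - w (y + h)| ≤ 2 * B := fun hB => by
    have := abs_sub (_ : ℝ) (_ : ℝ) |>.trans (add_le_add (hB y) (hB (y + h)))
    linarith
  rw [abs_mul, mul_min_of_nonneg _ _ (by positivity), le_min_iff, mul_one]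
  constructor
  · have hu' : |u y - u (y + h)| ≤ Cu * ‖h‖ ^ (r : ℝ) := by
      simpa [Real.dist_eq] using hu.dist_le y (y + h)
    have hφ' : |φ y - φ (y + h)| ≤ Cφ * ‖h‖ := by
      simpa [Real.dist_eq] using hφ.dist_le_mul y (y + h)
    calc |u y - u (y + h)| * |φ y - φ (y + h)| ≤ (Cu * ‖h‖ ^ (r : ℝ)) * (Cφ * ‖h‖) := by gcongr
      _ = Cu * Cφ * ‖h‖ ^ (1 + r : ℝ) := by
          rw [Real.rpow_add' (norm_nonneg h) (by positivity), Real.rpow_one]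
          ring
      _ ≤ _ := by gcongr; exact le_add_of_nonneg_right (by positivity)
  · exact (mul_le_mul (osc hBu) (osc hBφ) (abs_nonneg _) (by positivity)).trans
      (le_add_of_nonneg_left (by positivity))

variable [MeasurableSpace E] [BorelSpace E] (μ : Measure E) [μ.IsAddHaarMeasure]

lemma integral_diff_mul_diff {u φ : E → ℝ} (hu : Integrable u μ) (hφ : Continuous φ)
    (hc : HasCompactSupport φ) (h : E) :
    ∫ y, (u y - u (y + h)) * (φ y - φ (y + h)) ∂μ = -∫ y, u y * secondDiff φ y h ∂μ := by
  obtain ⟨B, hB⟩ := hc.exists_bound_of_continuous hφ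
  have hi : ∀ a c : E, Integrable (fun y => u (y + a) * φ (y + c)) μ := fun a c =>
    (hu.comp_add_right a).mul_bdd (c := B)
      (by fun_prop : Continuous fun y => φ (y + c)).aestronglyMeasurable
      (Eventually.of_forall fun y => hB _)
  have i00 : Integrable (fun y => u y * φ y) μ := by simpa using hi 0 0
  have i0h : Integrable (fun y => u y * φ (y + h)) μ := by simpa using hi 0 h
  have i0m : Integrable (fun y => u y * φ (y - h)) μ := by simpa [sub_eq_add_neg] using hi 0 (-h)
  have ih0 : Integrable (fun y => u (y + h) * φ y) μ := by simpa using hi h 0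
  have shift_both : ∫ y, u (y + h) * φ (y + h) ∂μ = ∫ y, u y * φ y ∂μ :=
    integral_add_right_eq_self (fun y => u y * φ y) h
  have shift_one : ∫ y, u (y + h) * φ y ∂μ = ∫ y, u y * φ (y - h) ∂μ := by
    simpa using integral_add_right_eq_self (μ := μ) (fun y => u y * φ (y - h)) h
  have lhs : ∫ y, (u y - u (y + h)) * (φ y - φ (y + h)) ∂μ =
      ∫ y, u y * φ y ∂μ - ∫ y, u y * φ (y + h) ∂μ -
        (∫ y, u (y + h) * φ y ∂μ - ∫ y, u (y + h) * φ (y + h) ∂μ) := by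
    rw [← integral_sub' i00 i0h, ← integral_sub' ih0 (hi h h), ← integral_sub' (i00.sub i0h)
      (ih0.sub (hi h h))]
    congr 1; funext y; simp only [Pi.sub_apply]; ring
  have rhs : ∫ y, u y * secondDiff φ y h ∂μ = ∫ y, u y * φ (y + h) ∂μ +
      ∫ y, u y * φ (y - h) ∂μ - 2 * ∫ y, u y * φ y ∂μ := by
    rw [← integral_const_mul, ← integral_add' i0h i0m, ← integral_sub' (i0h.add i0m)
      (i00.const_mul 2)]
    congr 1; funext y; simp only [secondDiff, Pi.add_apply, Pi.sub_apply]; ring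
  rw [lhs, rhs, shift_both, shift_one]
  ring

variable [NormedSpace ℝ E] [FiniteDimensional ℝ E]

lemma integrable_diff_mul_diff_div [Nontrivial E] {u φ : E → ℝ} {b Bu : ℝ} {Cu r : NNReal}
    (hb : Module.finrank ℝ E < b) (hbr : b < Module.finrank ℝ E + (1 + r))
    (huc : Continuous u) (hBu : ∀ y, |u y| ≤ Bu) (hu : HolderWith Cu r u)
    (hφ : ContDiff ℝ 1 φ) (hc : HasCompactSupport φ) :
    Integrable (fun p : E × E => (u p.1 - u (p.1 + p.2)) * (φ p.1 - φ (p.1 + p.2)) / ‖p.2‖ ^ b)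
      (μ.prod μ) := by
  obtain ⟨L, hL⟩ := hφ.lipschitzWith_of_hasCompactSupport hc one_ne_zero
  obtain ⟨Bφ, hBφ⟩ := hc.exists_bound_of_continuous hφ.continuous
  obtain ⟨D, hD0, hD⟩ := exists_abs_diff_mul_diff_le hBu hBφ hu hL
  set S : Set E := tsupport φ
  let χ : E → ℝ := S.indicator fun _ => 1
  have hχ0 : ∀ y, 0 ≤ χ y := Set.indicator_nonneg fun _ _ => zero_le_one
  have hχ : Integrable χ μ := (integrable_indicator_iff hc.isCompact.measurableSet).2
    (integrableOn_const hc.isCompact.measure_lt_top.ne)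
  have hW := (integrable_truncatedWeight μ hb hbr).const_mul D
  have dom : Integrable (fun p : E × E => χ p.1 * (D * truncatedWeight (1 + r) b p.2)) (μ.prod μ) :=
    hχ.mul_prod hW
  refine (dom.add ((measurePreserving_add_prod μ μ).integrable_comp_of_integrable dom)).mono' ?_
    (Eventually.of_forall fun p => ?_)
  · have hφc := hφ.continuous
    refine (Continuous.measurable ?_ |>.div (by fun_prop)).aestronglyMeasurable
    fun_prop
  · have key : |(u p.1 - u (p.1 + p.2)) * (φ p.1 - φ (p.1 + p.2))| ≤
        (χ p.1 + χ (p.1 + p.2)) * (D * min (‖p.2‖ ^ (1 + r : ℝ)) 1) := by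
      by_cases h : p.1 ∈ S ∨ p.1 + p.2 ∈ S
      · have : 1 ≤ χ p.1 + χ (p.1 + p.2) := by
          rcases h with h | h
          · simpa [χ, h] using hχ0 (p.1 + p.2)
          · simpa [χ, h] using hχ0 p.1
        exact (hD _ _).trans (le_mul_of_one_le_left (by positivity) this)
      · push Not at h
        simp [χ, h, image_eq_zero_of_notMem_tsupport h.1, image_eq_zero_of_notMem_tsupport h.2]
    simp only [Pi.add_apply, Function.comp_apply]
    rw [norm_div, Real.norm_of_nonneg (by positivity : 0 ≤ ‖p.2‖ ^ b), ← add_mul,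
      truncatedWeight, ← mul_div_assoc, ← mul_div_assoc]
    gcongr
    exact key

end DifferenceQuotients

variable {N : ℕ} {s : ℝ} {Ω : Set (Euc N)}

lemma Es_eq_integral_mul_fracLap [NeZero N] (hs : 0 < s) (hs1 : s < 1) {u φ : Euc N → ℝ}
    (huc : Continuous u) (hui : Integrable u) {Bu : ℝ} (hBu : ∀ y, |u y| ≤ Bu) {Cu r : NNReal}
    (hr : 2 * s < 1 + r) (hCu : HolderWith Cu r u) (hφ : ContDiff ℝ 2 φ)
    (hc : HasCompactSupport φ) : Es N s u φ = ∫ y, u y * fracLap N s φ y := by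
  set b : ℝ := N + 2 * s
  have hb : (Module.finrank ℝ (Euc N) : ℝ) < b := by simp [b, hs]
  have shear : ∫ p : Euc N × Euc N, (u p.1 - u p.2) * (φ p.1 - φ p.2) / ‖p.1 - p.2‖ ^ b =
      ∫ p : Euc N × Euc N, (u p.1 - u (p.1 + p.2)) * (φ p.1 - φ (p.1 + p.2)) / ‖p.2‖ ^ b := by
    rw [Measure.volume_eq_prod, ← (measurePreserving_prod_add volume volume).integral_comp
      (MeasurableEquiv.shearAddRight (Euc N)).measurableEmbedding]
    simp
  rw [Es, shear, Measure.volume_eq_prod, integral_prod_symm _ (integrable_diff_mul_diff_div volume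
    hb (by simp [b, hr]) huc hBu hCu (hφ.of_le one_le_two) hc)]
  simp_rw [integral_div, integral_diff_mul_diff volume hui hφ.continuous hc, ← integral_neg,
    ← integral_div]
  rw [integral_integral_swap (f := fun h y => -(u y * secondDiff φ y h) / ‖h‖ ^ b),
    ← integral_const_mul]
  · congr 1
    funext y
    simp_rw [neg_div, mul_div_assoc]
    rw [integral_neg, integral_const_mul, fracLap_eq_integral_secondDiff]
    ring
  · refine (integrable_prod_mul_secondDiff_div volume hb (by simp [b]; linarith) hφ hc hui
      measurable_id).swap.neg.congr (Eventually.of_forall fun p => ?_)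
    simp [Function.uncurry, neg_div, mul_div_assoc]

/-- `u` is a continuous distributional solution of `(-Δ)^s u = g` in `Ω` with `u = 0` outside `Ω`:
the equation is tested against `C_c^∞(Ω)` with the operator moved to the test function. -/
def IsDistribSolution (N : ℕ) (s : ℝ) (Ω : Set (Euc N)) (g u : Euc N → ℝ) : Prop :=
  Continuous u ∧ (∀ z, z ∉ Ω → u z = 0) ∧
    ∀ φ, IsTestFn N Ω φ → ∫ y, u y * fracLap N s φ y = ∫ z in Ω, g z * φ z

lemma IsDistribSolution.hasCompactSupport {g u : Euc N → ℝ} (hu : IsDistribSolution N s Ω g u)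
    (hb : Bornology.IsBounded Ω) : HasCompactSupport u :=
  .intro hb.isCompact_closure fun _ hz => hu.2.1 _ fun h => hz (subset_closure h)

lemma IsWeakSolution.isDistribSolution [NeZero N] (hs : 0 < s) (hs1 : s < 1)
    (hb : Bornology.IsBounded Ω) {f : Euc N → ℝ → ℝ} {u : Euc N → ℝ}
    (hu : IsWeakSolution N s Ω f u) : IsDistribSolution N s Ω (fun z => f z (u z)) u := by
  obtain ⟨⟨C, hC⟩, hout, hweak⟩ := hu
  have huc : Continuous u := hC.continuous (Real.toNNReal_pos.2 hs)
  have hcpt : HasCompactSupport u :=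
    .intro hb.isCompact_closure fun _ hz => hout _ fun h => hz (subset_closure h)
  obtain ⟨B, hB⟩ := hcpt.exists_bound_of_continuous huc
  refine ⟨huc, hout, fun φ hφ => ?_⟩
  rw [← hweak φ hφ, Es_eq_integral_mul_fracLap hs hs1 huc
    (huc.integrable_of_hasCompactSupport hcpt) hB (by rw [Real.coe_toNNReal s hs.le]; linarith)
    hC (hφ.1.of_le (by norm_cast)) hφ.2.1]

end WeakSolutions

section Collars

open Set
open scoped Topology NNReal ENNReal

section PseudoMetric

variable {α : Type*} [PseudoMetricSpace α] {Ω : Set α} {ρ : ℝ}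

/-- The inner collar of `Ω` of width `ρ`: the points of `Ω` at distance at most `ρ` from the
complement. -/
def collar (Ω : Set α) (ρ : ℝ) : Set α := {z ∈ Ω | infDist z Ωᶜ ≤ ρ}

/-- The points at distance more than `ρ` from the complement of `Ω`. -/
def core (Ω : Set α) (ρ : ℝ) : Set α := {z | ρ < infDist z Ωᶜ}

lemma mem_of_dist_lt_infDist_compl {z w : α} (h : dist z w < infDist z Ωᶜ) : w ∈ Ω := by
  by_contra hw
  exact (infDist_le_dist_of_mem hw).not_gt h

lemma core_subset (hρ : 0 ≤ ρ) : core Ω ρ ⊆ Ω := fun z hz =>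
  mem_of_dist_lt_infDist_compl ((dist_self z).trans_lt (hρ.trans_lt hz))

lemma closedBall_subset_core {a : ℝ} {z : α} (hz : z ∈ core Ω (a + ρ)) :
    closedBall z ρ ⊆ core Ω a := fun y hy => by
  have hzρ : a + ρ < infDist z Ωᶜ := hz
  have := infDist_le_infDist_add_dist (s := Ωᶜ) (x := z) (y := y)
  rw [mem_closedBall, dist_comm] at hy
  exact (by linarith : a < infDist y Ωᶜ)

lemma isOpen_core : IsOpen (core Ω ρ) := isOpen_lt continuous_const (continuous_infDist_pt _)

lemma collar_subset : collar Ω ρ ⊆ Ω := sep_subset _ _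

lemma measurableSet_collar [MeasurableSpace α] [OpensMeasurableSpace α] (hΩ : MeasurableSet Ω) :
    MeasurableSet (collar Ω ρ) :=
  hΩ.inter (isClosed_le (continuous_infDist_pt _) continuous_const).measurableSet

/-- The collars of `Ω` of width `ρ` have volume `O(ρ)`. -/
def HasLinearCollarVolume [MeasureSpace α] (Ω : Set α) : Prop :=
  ∃ V, ∀ ρ, 0 < ρ → volume.real (collar Ω ρ) ≤ V * ρ

end PseudoMetric

section NormedSpace

variable {E : Type*} [NormedAddCommGroup E] [NormedSpace ℝ E] {Ω : Set E}

lemma ne_univ_of_isBounded [Nontrivial E] (hb : Bornology.IsBounded Ω) : Ω ≠ univ := fun h =>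
  NormedSpace.unbounded_univ ℝ E (h ▸ hb)

lemma infDist_compl_pos [Nontrivial E] (ho : IsOpen Ω) (hb : Bornology.IsBounded Ω) {z : E}
    (hz : z ∈ Ω) : 0 < infDist z Ωᶜ :=
  (ho.isClosed_compl.notMem_iff_infDist_pos (nonempty_compl.2 (ne_univ_of_isBounded hb))).1
    (not_not.2 hz)

lemma exists_nhds_growth_of_hasStrictFDerivAt {F : E → ℝ} {F' : StrongDual ℝ E} {p : E}
    (hF : HasStrictFDerivAt F F' p) {e : E} (he : F' e = 1) :
    ∃ W ∈ 𝓝 p, ∀ z ∈ W, ∀ t, 0 ≤ t → z + t • e ∈ W → t / 2 ≤ F (z + t • e) - F z := by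
  obtain ⟨W, hW, happ⟩ := hF.approximates_deriv_on_nhds (c := (2 * (‖e‖₊ + 1))⁻¹)
    (Or.inr (by positivity))
  refine ⟨W, hW, fun z hz t ht hzt => ?_⟩
  have err : |F (z + t • e) - F z - t| ≤ (2 * (‖e‖ + 1))⁻¹ * (t * ‖e‖) := by
    simpa [he, norm_smul, abs_of_nonneg ht] using happ _ hzt _ hz
  have small : (2 * (‖e‖ + 1))⁻¹ * (t * ‖e‖) ≤ t / 2 := by
    rw [inv_mul_le_iff₀ (by positivity)]
    linarith
  linarith [(abs_le.1 err).1]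

lemma infDist_frontier_eq_infDist_compl [FiniteDimensional ℝ E] {z : E} (hz : z ∈ Ω)
    (hΩ : Ω ≠ univ) : infDist z (frontier Ω) = infDist z Ωᶜ := by
  obtain ⟨q, hq, hzq⟩ := exists_mem_frontier_infDist_compl_eq_dist hz hΩ
  refine le_antisymm (hzq ▸ infDist_le_dist_of_mem hq) ?_
  rw [← infDist_closure (s := Ωᶜ)]
  exact infDist_le_infDist_of_subset (frontier_compl Ω ▸ frontier_subset_closure) ⟨q, hq⟩

lemma exists_collar_subset_of_mem_nhdsSet_frontier [FiniteDimensional ℝ E] [Nontrivial E]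
    (hb : Bornology.IsBounded Ω) {W : Set E} (hW : W ∈ 𝓝ˢ (frontier Ω)) :
    ∃ ε, 0 < ε ∧ collar Ω ε ⊆ W := by
  have hc : IsCompact (frontier Ω) :=
    isCompact_of_isClosed_isBounded isClosed_frontier (hb.closure.subset frontier_subset_closure)
  obtain ⟨O, hO, hfO, hOW⟩ := mem_nhdsSet_iff_exists.1 hW
  obtain ⟨ε, hε, hsub⟩ := hc.exists_thickening_subset_open hO hfO
  refine ⟨ε / 2, half_pos hε, fun z ⟨hz, hzε⟩ => hOW (hsub (mem_thickening_iff.2 ?_))⟩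
  obtain ⟨q, hq, hzq⟩ := exists_mem_frontier_infDist_compl_eq_dist hz (ne_univ_of_isBounded hb)
  exact ⟨q, hq, by linarith⟩

lemma exists_nat_mul_mem_Icc_one_two {ρ : ℝ} (hρ : 0 < ρ) (hρ1 : ρ ≤ 1) :
    ∃ J : ℕ, ρ * J ∈ Icc 1 2 := by
  refine ⟨⌈1 / ρ⌉₊, (div_le_iff₀' hρ).1 (Nat.le_ceil _), ?_⟩
  calc ρ * ⌈1 / ρ⌉₊ ≤ ρ * (1 / ρ + 1) := by
        gcongr
        exact (Nat.ceil_lt_add_one (by positivity)).le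
    _ ≤ 2 := by
        rw [mul_add, mul_one_div_cancel hρ.ne']
        linarith

variable [MeasurableSpace E] [BorelSpace E] (μ : Measure E)

lemma nat_mul_measure_le_of_disjoint_translates [μ.IsAddRightInvariant] {S B : Set E}
    (hS : MeasurableSet S) (v : E) (J : ℕ) (hB : ∀ j < J, ∀ z ∈ S, z + (j : ℝ) • v ∈ B)
    (hdisj : ∀ n : ℕ, 0 < n → ∀ z ∈ S, z + (n : ℝ) • v ∉ S) : J * μ S ≤ μ B := by
  let T : ℕ → Set E := fun j => (fun z => z + -((j : ℝ) • v)) ⁻¹' S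
  have hT : ∀ j, μ (T j) = μ S := fun j => measure_preimage_add_right μ _ S
  have disj : ∀ i j, i < j → Disjoint (T i) (T j) := fun i j hij => by
    refine disjoint_left.2 fun w hi hj => hdisj (j - i) (by omega) _ hj ?_
    rw [Nat.cast_sub hij.le]
    convert mem_preimage.1 hi using 1
    module
  have hsub : (⋃ j ∈ Finset.range J, T j) ⊆ B := by
    refine iUnion₂_subset fun j hj w hw => ?_
    simpa using hB j (Finset.mem_range.1 hj) _ hw
  calc J * μ S = μ (⋃ j ∈ Finset.range J, T j) := by
        rw [measure_biUnion_finset]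
        · simp [hT]
        · intro i _ j _ hij
          rcases hij.lt_or_gt with h | h
          exacts [disj i j h, (disj j i h).symm]
        · exact fun j _ => hS.preimage (by fun_prop)
    _ ≤ μ B := measure_mono hsub

lemma exists_measure_thin_le_of_hasStrictFDerivAt [FiniteDimensional ℝ E]
    [μ.IsAddHaarMeasure] {F : E → ℝ} (hFm : Measurable F) {F' : StrongDual ℝ E} {p : E}
    (hF : HasStrictFDerivAt F F' p) (hF' : F' ≠ 0) :
    ∃ W ∈ 𝓝 p, ∃ V : ℝ≥0, ∀ ρ, 0 < ρ → ρ < 1 →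
      μ (W ∩ {z | F z ∈ Ioc 0 ρ}) ≤ V * ENNReal.ofReal ρ := by
  obtain ⟨e, he⟩ : ∃ e, F' e = 1 := by
    obtain ⟨v, hv⟩ : ∃ v, F' v ≠ 0 := by
      by_contra! h
      exact hF' (ContinuousLinearMap.ext h)
    exact ⟨(F' v)⁻¹ • v, by simp [hv]⟩
  obtain ⟨W, hW, grow⟩ := exists_nhds_growth_of_hasStrictFDerivAt hF he
  obtain ⟨R, hR, hRW⟩ := Metric.mem_nhds_iff.1 hW
  have hfin : μ (ball p (R + 4 * ‖e‖)) ≠ ∞ := measure_ball_lt_top.ne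
  refine ⟨ball p R, ball_mem_nhds p hR, (μ (ball p (R + 4 * ‖e‖))).toNNReal,
    fun ρ hρ hρ1 => ?_⟩
  set S : Set E := ball p R ∩ {z | F z ∈ Ioc 0 ρ}
  obtain ⟨J, hJlow, hJup⟩ := exists_nat_mul_mem_Icc_one_two hρ hρ1.le
  have packing : J * μ S ≤ μ (ball p (R + 4 * ‖e‖)) := by
    refine nat_mul_measure_le_of_disjoint_translates μ
      (measurableSet_ball.inter (hFm measurableSet_Ioc)) ((2 * ρ) • e) J ?_ ?_
    · intro j hj z hz
      have hjJ : ρ * j ≤ ρ * J := by gcongr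
      have hzp : ‖z - p‖ < R := mem_ball_iff_norm.1 hz.1
      have : ‖z + (j : ℝ) • (2 * ρ) • e - p‖ ≤ ‖z - p‖ + (j * (2 * ρ)) * ‖e‖ := by
        rw [add_sub_right_comm, smul_smul]
        refine (norm_add_le _ _).trans_eq ?_
        rw [norm_smul, Real.norm_of_nonneg (by positivity)]
      rw [mem_ball_iff_norm]
      nlinarith [norm_nonneg e]
    · intro n hn z hz hzn
      have hn1 : (1 : ℝ) ≤ n := by exact_mod_cast hn
      rw [smul_smul] at hzn
      have := grow z (hRW hz.1) (n * (2 * ρ)) (by positivity) (hRW hzn.1)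
      nlinarith [hz.2.1, hzn.2.2]
  calc μ S ≤ ENNReal.ofReal (ρ * J) * μ S :=
        le_mul_of_one_le_left' (ENNReal.one_le_ofReal.2 hJlow)
    _ = J * μ S * ENNReal.ofReal ρ := by
        rw [ENNReal.ofReal_mul hρ.le, ENNReal.ofReal_natCast]
        ring
    _ ≤ _ := by
        rw [ENNReal.coe_toNNReal hfin]
        gcongr

end NormedSpace

variable {N : ℕ} {Ω : Set (Euc N)}

lemma bdist_eq_infDist_compl [NeZero N] (hb : Bornology.IsBounded Ω) {z : Euc N} (hz : z ∈ Ω) :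
    bdist N Ω z = infDist z Ωᶜ :=
  infDist_frontier_eq_infDist_compl hz (ne_univ_of_isBounded hb)

lemma signedDistSet_of_mem {z : Euc N} (hz : z ∈ Ω) : signedDistSet N Ω z = infDist z Ωᶜ := by
  simp [signedDistSet, infDist_zero_of_mem hz]

lemma continuous_signedDistSet : Continuous (signedDistSet N Ω) :=
  (continuous_infDist_pt _).sub (continuous_infDist_pt _)

-- Along the segment from `z` to a nearest boundary point the distance decreases at unit speed.
lemma one_le_norm_fderiv_signedDistSet [NeZero N] (ho : IsOpen Ω) (hb : Bornology.IsBounded Ω)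
    {z : Euc N} (hz : z ∈ Ω) (hd : DifferentiableAt ℝ (signedDistSet N Ω) z) :
    1 ≤ ‖fderiv ℝ (signedDistSet N Ω) z‖ := by
  obtain ⟨q, hq, hzq⟩ := ho.isClosed_compl.exists_infDist_eq_dist
    (nonempty_compl.2 (ne_univ_of_isBounded hb)) z
  set D := infDist z Ωᶜ
  have hD : 0 < D := infDist_compl_pos ho hb hz
  set v := q - z
  have hv : ‖v‖ = D := by rw [hzq, dist_comm, dist_eq_norm]
  have decrease : ∀ t ∈ Ioo (0 : ℝ) 1,
      signedDistSet N Ω (z + t • v) ≤ signedDistSet N Ω z - t * D := fun t ht => by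
    have hmem : z + t • v ∈ Ω := mem_of_dist_lt_infDist_compl (z := z) <| by
      rw [dist_self_add_right, norm_smul, hv, Real.norm_of_nonneg ht.1.le]
      exact mul_lt_of_lt_one_left hD ht.2
    rw [signedDistSet_of_mem hmem, signedDistSet_of_mem hz]
    refine (infDist_le_dist_of_mem hq).trans_eq ?_
    rw [dist_eq_norm, show z + t • v - q = -((1 - t) • v) by simp only [v]; module, norm_neg,
      norm_smul, hv, Real.norm_of_nonneg (by linarith [ht.2])]
    ring
  have hderiv : fderiv ℝ (signedDistSet N Ω) z v ≤ -D := by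
    refine le_of_tendsto (hd.hasFDerivAt.hasLineDerivAt v).tendsto_slope_zero_right ?_
    filter_upwards [Ioo_mem_nhdsGT one_pos] with t ht
    rw [smul_eq_mul, inv_mul_le_iff₀ ht.1]
    linarith [decrease t ht]
  have hle := (fderiv ℝ (signedDistSet N Ω) z).le_opNorm v
  rw [hv, Real.norm_eq_abs] at hle
  nlinarith [neg_le_abs (fderiv ℝ (signedDistSet N Ω) z v)]

lemma IsC11.exists_hasStrictFDerivAt_signedDistSet [NeZero N] (hΩ : IsC11 N Ω) {p : Euc N}
    (hp : p ∈ frontier Ω) :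
    ∃ F' : StrongDual ℝ (Euc N), F' ≠ 0 ∧ HasStrictFDerivAt (signedDistSet N Ω) F' p := by
  obtain ⟨ho, hb, U, hUo, hfU, hd, K, hK⟩ := hΩ
  have hpU : U ∈ 𝓝 p := hUo.mem_nhds (hfU hp)
  have hcont : ContinuousAt (fderiv ℝ (signedDistSet N Ω)) p := by
    have := (InnerProductSpace.toDual ℝ (Euc N)).continuous.continuousAt.comp
      (hK.continuousOn.continuousAt hpU)
    simpa [Function.comp_def, gradient] using this
  have hone : 1 ≤ ‖fderiv ℝ (signedDistSet N Ω) p‖ := by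
    have : (𝓝[Ω] p).NeBot := mem_closure_iff_nhdsWithin_neBot.1 (frontier_subset_closure hp)
    refine ge_of_tendsto (hcont.norm.tendsto.mono_left (nhdsWithin_le_nhds (s := Ω))) ?_
    filter_upwards [self_mem_nhdsWithin, mem_nhdsWithin_of_mem_nhds hpU] with z hz hzU
    exact one_le_norm_fderiv_signedDistSet ho hb hz (hd z hzU)
  refine ⟨_, norm_pos_iff.1 (one_pos.trans_le hone),
    hasStrictFDerivAt_of_hasFDerivAt_of_continuousAt ?_ hcont⟩
  filter_upwards [hpU] with z hz using (hd z hz).hasFDerivAt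

lemma IsC11.exists_nhdsSet_volume_collar_le [NeZero N] (hΩ : IsC11 N Ω) :
    ∃ W ∈ 𝓝ˢ (frontier Ω), ∃ V : ℝ≥0, ∀ ρ, 0 < ρ → ρ < 1 →
      volume (W ∩ collar Ω ρ) ≤ V * ENNReal.ofReal ρ := by
  have hc : IsCompact (frontier Ω) := isCompact_of_isClosed_isBounded isClosed_frontier
    (hΩ.2.1.closure.subset frontier_subset_closure)
  refine hc.induction_on (p := fun S => ∃ W ∈ 𝓝ˢ S, ∃ V : ℝ≥0, ∀ ρ, 0 < ρ → ρ < 1 →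
    volume (W ∩ collar Ω ρ) ≤ V * ENNReal.ofReal ρ) ⟨∅, by simp⟩ ?_ ?_ ?_
  · rintro S T hST ⟨W, hW, hV⟩
    exact ⟨W, nhdsSet_mono hST hW, hV⟩
  · rintro S T ⟨W₁, hW₁, V₁, hV₁⟩ ⟨W₂, hW₂, V₂, hV₂⟩
    refine ⟨W₁ ∪ W₂, union_mem_nhdsSet hW₁ hW₂, V₁ + V₂, fun ρ hρ hρ1 => ?_⟩
    rw [union_inter_distrib_right, ENNReal.coe_add, add_mul]
    exact (measure_union_le _ _).trans (add_le_add (hV₁ ρ hρ hρ1) (hV₂ ρ hρ hρ1))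
  · intro p hp
    obtain ⟨F', hF'0, hF'⟩ := hΩ.exists_hasStrictFDerivAt_signedDistSet hp
    obtain ⟨W, hW, V, hV⟩ := exists_measure_thin_le_of_hasStrictFDerivAt volume
      continuous_signedDistSet.measurable hF' hF'0
    refine ⟨interior W, mem_nhdsWithin_of_mem_nhds (interior_mem_nhds.2 hW), interior W,
      isOpen_interior.mem_nhdsSet_self, V, fun ρ hρ hρ1 => ?_⟩
    refine (measure_mono ?_).trans (hV ρ hρ hρ1)
    rintro z ⟨hzW, hz, hzρ⟩
    refine ⟨interior_subset hzW, ?_⟩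
    rw [mem_ofPred_eq, signedDistSet_of_mem hz]
    exact ⟨infDist_compl_pos hΩ.1 hΩ.2.1 hz, hzρ⟩

lemma IsC11.hasLinearCollarVolume [NeZero N] (hΩ : IsC11 N Ω) : HasLinearCollarVolume Ω := by
  obtain ⟨W, hW, V, hV⟩ := hΩ.exists_nhdsSet_volume_collar_le
  obtain ⟨ε, hε, hεW⟩ := exists_collar_subset_of_mem_nhdsSet_frontier hΩ.2.1 hW
  have hfin : volume Ω ≠ ∞ := hΩ.2.1.measure_lt_top.ne
  have hm : 0 < min ε 1 := lt_min hε one_pos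
  refine ⟨V + volume.real Ω / min ε 1, fun ρ hρ => ?_⟩
  rw [add_mul]
  rcases lt_or_ge ρ (min ε 1) with h | h
  · have hsub : collar Ω ρ ⊆ W ∩ collar Ω ρ := fun z hz =>
      ⟨hεW ⟨hz.1, hz.2.trans (h.le.trans (min_le_left _ _))⟩, hz⟩
    have := (measure_mono hsub).trans (hV ρ hρ (h.trans_le (min_le_right _ _)))
    refine le_add_of_le_of_nonneg ?_ (by positivity)
    simpa [measureReal_def, hρ.le] using ENNReal.toReal_mono (by finiteness) this
  · refine le_add_of_nonneg_of_le (by positivity) ((measureReal_mono collar_subset hfin).trans ?_)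
    rw [div_mul_eq_mul_div, le_div_iff₀ hm]
    gcongr

end Collars

section Dilations

open Function

variable {E : Type*} [NormedAddCommGroup E] [NormedSpace ℝ E] {k : E → ℝ} {ρ : ℝ} {m : ℕ}

/-- The kernel `k` rescaled to length scale `ρ`, with amplitude `ρ⁻ᵐ`: for `m = dim E` this
preserves the integral, and differentiation raises `m` by one. -/
def dilate (m : ℕ) (k : E → ℝ) (ρ : ℝ) (y : E) : ℝ := (ρ ^ m)⁻¹ * k (ρ⁻¹ • y)

lemma contDiff_dilate {n : WithTop ℕ∞} (hk : ContDiff ℝ n k) : ContDiff ℝ n (dilate m k ρ) :=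
  contDiff_const.mul (hk.comp (contDiff_const_smul _))

lemma support_dilate_subset (hρ : 0 < ρ) (hk : support k ⊆ closedBall 0 1) :
    support (dilate m k ρ) ⊆ closedBall 0 ρ := fun y hy => by
  have := hk (right_ne_zero_of_mul (mem_support.1 hy))
  rwa [mem_closedBall_zero_iff, norm_smul, norm_inv, Real.norm_of_nonneg hρ.le,
    inv_mul_le_iff₀ hρ, mul_one, ← mem_closedBall_zero_iff] at this

lemma fderiv_dilate_apply (hk : Differentiable ℝ k) (y e : E) :
    fderiv ℝ (dilate m k ρ) y e = dilate (m + 1) (fun w => fderiv ℝ k w e) ρ y := by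
  have hsmul : HasFDerivAt (fun z : E => ρ⁻¹ • z) (ρ⁻¹ • ContinuousLinearMap.id ℝ E) y :=
    (hasFDerivAt_id y).const_smul ρ⁻¹
  have := (((hk (ρ⁻¹ • y)).hasFDerivAt.comp y hsmul).const_mul (ρ ^ m)⁻¹).fderiv
  rw [show dilate m k ρ = fun y => (ρ ^ m)⁻¹ * (k ∘ fun z : E => ρ⁻¹ • z) y from rfl, this, dilate]
  simp only [smul_apply, ContinuousLinearMap.comp_apply, ContinuousLinearMap.id_apply, map_smul,
    smul_eq_mul, pow_succ, mul_inv, mul_assoc]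

lemma support_fderiv_apply_subset {S : Set E} (hS : IsClosed S) (hk : support k ⊆ S) (e : E) :
    support (fun w => fderiv ℝ k w e) ⊆ S := fun w hw => by
  refine closure_minimal hk hS (support_fderiv_subset ℝ (f := k) fun h => hw ?_)
  simp [h]

variable [FiniteDimensional ℝ E]

lemma hasCompactSupport_of_support_subset_closedBall (hk : support k ⊆ closedBall 0 ρ) :
    HasCompactSupport k :=
  HasCompactSupport.of_support_subset_isCompact (isCompact_closedBall 0 ρ) hk

variable [MeasurableSpace E] [BorelSpace E] (μ : Measure E) [μ.IsAddHaarMeasure]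

lemma integral_dilate (m : ℕ) (k : E → ℝ) (hρ : 0 < ρ) :
    ∫ y, dilate m k ρ y ∂μ = (ρ ^ m)⁻¹ * ρ ^ Module.finrank ℝ E * ∫ y, k y ∂μ := by
  simp only [dilate]
  rw [integral_const_mul, Measure.integral_comp_inv_smul_of_nonneg _ _ hρ.le, smul_eq_mul,
    mul_assoc]

lemma integral_abs_dilate (m : ℕ) (k : E → ℝ) (hρ : 0 < ρ) :
    ∫ y, |dilate m k ρ y| ∂μ = (ρ ^ m)⁻¹ * ρ ^ Module.finrank ℝ E * ∫ y, |k y| ∂μ := by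
  rw [← integral_dilate μ m (fun y => |k y|) hρ]
  refine integral_congr_ae (.of_forall fun y => ?_)
  simp only [dilate]
  rw [abs_mul, abs_of_pos (by positivity)]

end Dilations

section Mollification

open Function
open ContinuousLinearMap (mul)
open scoped Convolution Topology ContDiff

variable {E : Type*} [NormedAddCommGroup E] [MeasurableSpace E] {μ : Measure E}
  {u w k κ : E → ℝ} {x e : E} {ρ : ℝ}

lemma support_convolution_subset_core {Ω : Set E} {a : ℝ} (hw : support w ⊆ core Ω a)
    (hk : support k ⊆ closedBall 0 ρ) : support (w ⋆[mul ℝ ℝ, μ] k) ⊆ core Ω (a - ρ) := by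
  refine (support_convolution_subset _).trans ?_
  rintro _ ⟨y, hy, v, hv, rfl⟩
  have hya : a < infDist y Ωᶜ := hw hy
  have hvρ : ‖v‖ ≤ ρ := mem_closedBall_zero_iff.1 (hk hv)
  have := infDist_le_infDist_add_dist (s := Ωᶜ) (x := y) (y := y + v)
  rw [dist_self_add_right] at this
  exact (by linarith : a - ρ < infDist (y + v) Ωᶜ)

lemma convolution_indicator_eq {S : Set E} {z : E} (hk : support k ⊆ closedBall 0 ρ)
    (hS : closedBall z ρ ⊆ S) : (S.indicator w ⋆[mul ℝ ℝ, μ] k) z = (w ⋆[mul ℝ ℝ, μ] k) z := by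
  rw [convolution_def, convolution_def]
  congr 1
  funext y
  by_cases hy : y ∈ S
  · rw [Set.indicator_of_mem hy]
  · have : z - y ∉ support k := fun h => hy <| hS <| by
      simpa [dist_eq_norm, norm_sub_rev] using hk h
    simp [notMem_support.1 this]

variable [NormedSpace ℝ E] [FiniteDimensional ℝ E] [BorelSpace E] [μ.IsAddHaarMeasure]

variable (μ) in
lemma exists_mollifier : ∃ κ : E → ℝ, ContDiff ℝ ∞ κ ∧ support κ ⊆ closedBall 0 1 ∧
    (∀ v, 0 ≤ κ v) ∧ ∫ v, κ v ∂μ = 1 := by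
  let χ : ContDiffBump (0 : E) := ⟨1 / 2, 1, by norm_num, by norm_num⟩
  exact ⟨χ.normed μ, χ.contDiff_normed, χ.support_normed_eq.trans_subset ball_subset_closedBall,
    χ.nonneg_normed, χ.integral_normed⟩

lemma fderiv_convolution_apply (hw : LocallyIntegrable w μ) (hk : ContDiff ℝ 1 k)
    (hc : HasCompactSupport k) (e : E) (z : E) :
    fderiv ℝ (w ⋆[mul ℝ ℝ, μ] k) z e = (w ⋆[mul ℝ ℝ, μ] fun y => fderiv ℝ k y e) z := by
  rw [(hc.hasFDerivAt_convolution_right (ContinuousLinearMap.mul ℝ ℝ) hw hk z).fderiv,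
    convolution_precompR_apply (ContinuousLinearMap.mul ℝ ℝ) hw (hc.fderiv ℝ)
      (hk.continuous_fderiv one_ne_zero)]

lemma abs_convolution_le {B : ℝ} (hk : Integrable k μ) (hB : ∀ y, |w y| ≤ B) (z : E) :
    |(w ⋆[mul ℝ ℝ, μ] k) z| ≤ B * ∫ y, |k y| ∂μ := by
  calc |(w ⋆[mul ℝ ℝ, μ] k) z| ≤ ∫ y, B * |k (z - y)| ∂μ := by
        rw [← Real.norm_eq_abs, convolution_def]
        refine norm_integral_le_of_norm_le ((hk.abs.comp_sub_left z).const_mul B)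
          (.of_forall fun y => ?_)
        rw [ContinuousLinearMap.mul_apply', norm_mul]
        exact mul_le_mul_of_nonneg_right (hB y) (abs_nonneg _)
    _ = B * ∫ y, |k y| ∂μ := by
        rw [integral_const_mul, integral_sub_left_eq_self (fun y => |k y|)]

lemma integrable_mul_convolution {v : E → ℝ} {B : ℝ} (hv : Integrable v μ) (hw : Integrable w μ)
    (hB : ∀ y, |w y| ≤ B) (hk : Integrable k μ) :
    Integrable (fun z => v z * (w ⋆[mul ℝ ℝ, μ] k) z) μ :=
  hv.mul_bdd (hw.integrable_convolution _ hk).aestronglyMeasurable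
    (.of_forall (abs_convolution_le hk hB))

lemma integral_fderiv_apply_eq_zero (hκ : ContDiff ℝ 1 κ) (hc : HasCompactSupport κ) (e : E) :
    ∫ v, fderiv ℝ κ v e ∂μ = 0 := by
  have hi : Integrable (fun v => fderiv ℝ κ v e) μ :=
    ((hκ.continuous_fderiv one_ne_zero).clm_apply continuous_const).integrable_of_hasCompactSupport
      (hc.fderiv_apply ℝ e)
  simpa using integral_mul_fderiv_eq_neg_fderiv_mul_of_integrable (μ := μ) (f := fun _ => (1 : ℝ))
    (g := κ) (v := e) (by simp) (by simpa using hi)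
    (by simpa using hκ.continuous.integrable_of_hasCompactSupport hc)
    (fun z _ => differentiableAt_const _) (fun z _ => hκ.differentiable one_ne_zero z)

lemma integral_clm_mul_fderiv_apply (hκ : ContDiff ℝ 1 κ) (hc : HasCompactSupport κ)
    (L : StrongDual ℝ E) (e : E) :
    ∫ v, L v * fderiv ℝ κ v e ∂μ = -(L e * ∫ v, κ v ∂μ) := by
  have hκi : Integrable κ μ := hκ.continuous.integrable_of_hasCompactSupport hc
  have hcont : Continuous fun v => fderiv ℝ κ v e :=
    (hκ.continuous_fderiv one_ne_zero).clm_apply continuous_const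
  rw [integral_mul_fderiv_eq_neg_fderiv_mul_of_integrable (μ := μ)
    (by simpa using hκi.const_mul (L e))
    ((L.continuous.mul hcont).integrable_of_hasCompactSupport (hc.fderiv_apply ℝ e).mul_left)
    ((L.continuous.mul hκ.continuous).integrable_of_hasCompactSupport hc.mul_left)
    (fun z _ => L.differentiableAt) (fun z _ => hκ.differentiable one_ne_zero z)]
  simp only [ContinuousLinearMap.fderiv, integral_const_mul]

lemma tendsto_integral_slope_mul {L : StrongDual ℝ E} (hu : HasFDerivAt u L x)
    (huc : Continuous u) (hk : Continuous k) (hk1 : support k ⊆ closedBall 0 1) :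
    Tendsto (fun ρ : ℝ => ∫ v, ρ⁻¹ * (u (x - ρ • v) - u x) * k v ∂μ) (𝓝[>] 0)
      (𝓝 (-∫ v, L v * k v ∂μ)) := by
  obtain ⟨A, hA, hbound⟩ := hu.isBigO_sub.exists_pos
  obtain ⟨δ, hδ, hlip⟩ := Metric.eventually_nhds_iff.1 hbound.bound
  have hki : Integrable k μ :=
    hk.integrable_of_hasCompactSupport (hasCompactSupport_of_support_subset_closedBall hk1)
  simp_rw [← integral_neg, ← neg_mul]
  refine tendsto_integral_filter_of_dominated_convergence (fun v => A * |k v|)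
    (.of_forall fun ρ => Continuous.aestronglyMeasurable (by fun_prop)) ?_
    (hki.abs.const_mul _) (.of_forall fun v => Tendsto.mul_const _ ?_)
  · filter_upwards [Ioo_mem_nhdsGT hδ] with ρ hρ
    refine .of_forall fun v => ?_
    by_cases hv : k v = 0
    · simp [hv]
    have hv1 : ‖v‖ ≤ 1 := mem_closedBall_zero_iff.1 (hk1 hv)
    have hn : ‖x - ρ • v - x‖ ≤ ρ := by
      rw [sub_sub_cancel_left, norm_neg, norm_smul, Real.norm_of_nonneg hρ.1.le]
      exact mul_le_of_le_one_right hρ.1.le hv1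
    rw [norm_mul, Real.norm_eq_abs (k v), norm_mul, norm_inv, Real.norm_of_nonneg hρ.1.le]
    gcongr
    rw [inv_mul_le_iff₀ hρ.1, mul_comm ρ]
    exact (hlip (by rw [dist_eq_norm]; exact hn.trans_lt hρ.2)).trans (by gcongr)
  · have hline : HasDerivAt (fun ρ : ℝ => x - ρ • v) (-v) 0 := by
      simpa using ((hasDerivAt_id (0 : ℝ)).smul_const v).const_sub x
    have hu' : HasFDerivAt u L ((fun ρ : ℝ => x - ρ • v) 0) := by simpa using hu
    simpa [smul_eq_mul] using (hu'.comp_hasDerivAt (0 : ℝ) hline).tendsto_slope_zero_right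

lemma convolution_dilate_eq_integral_slope_mul (huc : Continuous u) (hk : Continuous k)
    (hc : HasCompactSupport k) (hk0 : ∫ v, k v ∂μ = 0) (hρ : 0 < ρ) :
    (u ⋆[mul ℝ ℝ, μ] dilate (Module.finrank ℝ E + 1) k ρ) x =
      ∫ v, ρ⁻¹ * (u (x - ρ • v) - u x) * k v ∂μ := by
  have hscale : ∫ y, u (x - y) * dilate (Module.finrank ℝ E + 1) k ρ y ∂μ =
      ∫ v, ρ⁻¹ * u (x - ρ • v) * k v ∂μ := by
    have := integral_dilate μ (Module.finrank ℝ E) (fun v => ρ⁻¹ * u (x - ρ • v) * k v) hρ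
    rw [inv_mul_cancel₀ (by positivity), one_mul] at this
    rw [← this]
    refine integral_congr_ae (.of_forall fun y => ?_)
    simp only [dilate, smul_smul, mul_inv_cancel₀ hρ.ne', one_smul, pow_succ, mul_inv]
    ring
  have hsub : ∫ v, ρ⁻¹ * (u (x - ρ • v) - u x) * k v ∂μ =
      ∫ v, ρ⁻¹ * u (x - ρ • v) * k v ∂μ - ∫ v, ρ⁻¹ * u x * k v ∂μ := by
    have hi : Integrable (fun v => ρ⁻¹ * u (x - ρ • v) * k v) μ :=
      Continuous.integrable_of_hasCompactSupport (by fun_prop) hc.mul_left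
    rw [← integral_sub hi ((hk.integrable_of_hasCompactSupport hc).const_mul _)]
    exact integral_congr_ae (.of_forall fun v => by ring)
  rw [hsub, integral_const_mul, hk0, mul_zero, sub_zero, ← hscale,
    ← integral_sub_left_eq_self (fun y => u (x - y) * dilate _ k ρ y) μ x]
  simp [convolution_def]

lemma tendsto_convolution_dilate_fderiv (hκ : ContDiff ℝ 1 κ) (hκ1 : support κ ⊆ closedBall 0 1)
    (hκi : ∫ y, κ y ∂μ = 1) (hu : DifferentiableAt ℝ u x) (huc : Continuous u) (e : E) :
    Tendsto
      (fun ρ : ℝ => (u ⋆[mul ℝ ℝ, μ] dilate (Module.finrank ℝ E + 1) (fun w => fderiv ℝ κ w e) ρ) x)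
      (𝓝[>] 0) (𝓝 (fderiv ℝ u x e)) := by
  have hc := hasCompactSupport_of_support_subset_closedBall hκ1
  have hk : Continuous fun v => fderiv ℝ κ v e :=
    (hκ.continuous_fderiv one_ne_zero).clm_apply continuous_const
  have hslope := tendsto_integral_slope_mul (μ := μ) hu.hasFDerivAt huc hk
    (support_fderiv_apply_subset isClosed_closedBall hκ1 e)
  rw [integral_clm_mul_fderiv_apply hκ hc, neg_neg, hκi, mul_one] at hslope
  refine hslope.congr' ?_
  filter_upwards [self_mem_nhdsWithin] with ρ hρ
  exact (convolution_dilate_eq_integral_slope_mul huc hk (hc.fderiv_apply ℝ e)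
    (integral_fderiv_apply_eq_zero hκ hc e) hρ).symm

end Mollification

section IntegrationByParts

open Function
open scoped Topology

variable {E : Type*} [NormedAddCommGroup E] [NormedSpace ℝ E] [FiniteDimensional ℝ E]

section Puncture

variable {x : E} {r : ℝ}

/-- A smooth cutoff removing the pole `x`: it vanishes at distance less than `r` from `x` and equals
`1` at distance more than `2 * r`. -/
def puncture (x : E) (r : ℝ) (z : E) : ℝ :=
  1 - (⟨1, 2, one_pos, one_lt_two⟩ : ContDiffBump (0 : E)) (r⁻¹ • (z - x))

lemma contDiff_puncture {n : ℕ∞} : ContDiff ℝ n (puncture x r) :=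
  contDiff_const.sub ((ContDiffBump.contDiff _).comp
    (contDiff_const.smul (contDiff_id.sub contDiff_const)))

lemma abs_puncture_le_one (z : E) : |puncture x r z| ≤ 1 := by
  rw [puncture, abs_of_nonneg (sub_nonneg.2 (ContDiffBump.le_one _))]
  exact sub_le_self _ (ContDiffBump.nonneg _)

lemma puncture_eventuallyEq_zero {z : E} (hr : 0 < r) (hz : ‖z - x‖ < r) :
    puncture x r =ᶠ[𝓝 z] 0 := by
  filter_upwards [(isOpen_lt (by fun_prop) continuous_const :
    IsOpen {w : E | ‖w - x‖ < r}).mem_nhds hz] with w hw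
  refine sub_eq_zero.2 (ContDiffBump.one_of_mem_closedBall _ ?_).symm
  rw [mem_closedBall_zero_iff, norm_smul, norm_inv, Real.norm_of_nonneg hr.le,
    inv_mul_le_iff₀ hr, mul_one]
  exact hw.le

lemma puncture_eventuallyEq_one {z : E} (hr : 0 < r) (hz : 2 * r < ‖z - x‖) :
    puncture x r =ᶠ[𝓝 z] 1 := by
  filter_upwards [(isOpen_lt continuous_const (by fun_prop) :
    IsOpen {w : E | 2 * r < ‖w - x‖}).mem_nhds hz] with w hw
  refine sub_eq_self.2 (ContDiffBump.zero_of_le_dist _ ?_)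
  rw [dist_zero_right, norm_smul, norm_inv, Real.norm_of_nonneg hr.le, le_inv_mul_iff₀ hr,
    mul_comm]
  exact hw.le

lemma notMem_tsupport_puncture (hr : 0 < r) : x ∉ tsupport (puncture x r) :=
  notMem_tsupport_iff_eventuallyEq.2 (puncture_eventuallyEq_zero hr (by simpa))

lemma tendsto_puncture {z : E} (hz : z ≠ x) :
    Tendsto (fun r => puncture x r z) (𝓝[>] 0) (𝓝 1) := by
  have hpos : 0 < ‖z - x‖ / 2 := half_pos (norm_pos_iff.2 (sub_ne_zero.2 hz))
  refine tendsto_const_nhds.congr' ?_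
  filter_upwards [Ioo_mem_nhdsGT hpos] with r hr
  exact (puncture_eventuallyEq_one hr.1 (by linarith [hr.2])).eq_of_nhds.symm

lemma fderiv_puncture_eq_zero {z : E} (hr : 0 < r) (hz : ‖z - x‖ < r ∨ 2 * r < ‖z - x‖) :
    fderiv ℝ (puncture x r) z = 0 := by
  rcases hz with hz | hz
  · rw [(puncture_eventuallyEq_zero hr hz).fderiv_eq]
    exact fderiv_const_apply 0
  · rw [(puncture_eventuallyEq_one hr hz).fderiv_eq]
    exact fderiv_const_apply 1

lemma exists_norm_fderiv_puncture_le (x : E) :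
    ∃ A, 0 ≤ A ∧ ∀ r, 0 < r → ∀ z, ‖fderiv ℝ (puncture x r) z‖ ≤ r⁻¹ * A := by
  let χ : ContDiffBump (0 : E) := ⟨1, 2, one_pos, one_lt_two⟩
  have hχ : ContDiff ℝ 1 χ := χ.contDiff
  obtain ⟨A, hA⟩ := (χ.hasCompactSupport.fderiv (𝕜 := ℝ)).exists_bound_of_continuous
    (hχ.continuous_fderiv one_ne_zero)
  refine ⟨A, (norm_nonneg _).trans (hA 0), fun r hr z => ?_⟩
  have hin : HasFDerivAt (fun z : E => r⁻¹ • (z - x)) (r⁻¹ • ContinuousLinearMap.id ℝ E) z :=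
    ((hasFDerivAt_id z).sub_const x).const_smul r⁻¹
  have hd : HasFDerivAt (puncture x r)
      (-(fderiv ℝ χ (r⁻¹ • (z - x))).comp (r⁻¹ • ContinuousLinearMap.id ℝ E)) z :=
    (((hχ.differentiable one_ne_zero _).hasFDerivAt).comp z hin).const_sub 1
  rw [hd.fderiv, norm_neg, ContinuousLinearMap.comp_smul, ContinuousLinearMap.comp_id, norm_smul,
    norm_inv, Real.norm_of_nonneg hr.le]
  exact mul_le_mul_of_nonneg_left (hA _) (by positivity)

end Puncture

variable [MeasurableSpace E] [BorelSpace E] {μ : Measure E} [μ.IsAddHaarMeasure] {x e : E}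
  {Γ H : E → ℝ} {C p : ℝ}

lemma tendsto_integral_mul_puncture [Nontrivial E] {f : E → ℝ} (hf : Integrable f μ) :
    Tendsto (fun r => ∫ z, f z * puncture x r z ∂μ) (𝓝[>] 0) (𝓝 (∫ z, f z ∂μ)) := by
  refine tendsto_integral_filter_of_dominated_convergence (fun z => ‖f z‖)
    (.of_forall fun r => hf.aestronglyMeasurable.mul
      (contDiff_puncture (n := 0)).continuous.aestronglyMeasurable)
    (.of_forall fun r => .of_forall fun z => ?_) hf.norm ?_
  · rw [norm_mul]
    exact mul_le_of_le_one_right (norm_nonneg _) (abs_puncture_le_one z)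
  · have hne : ∀ᵐ z ∂μ, z ≠ x := compl_mem_ae_iff.2 (measure_singleton x)
    filter_upwards [hne] with z hz
    simpa using (tendsto_puncture hz).const_mul (f z)

lemma exists_abs_integral_mul_fderiv_puncture_le {F : E → ℝ} (hC : 0 ≤ C) (hp : 0 ≤ p)
    (hF : ∀ z, z ≠ x → |F z| ≤ C * ‖z - x‖ ^ (-p)) (e : E) :
    ∃ A, ∀ r, 0 < r → |∫ z, F z * fderiv ℝ (puncture x r) z e ∂μ| ≤
      A * r ^ (Module.finrank ℝ E - p - 1) := by
  obtain ⟨A, hA0, hA⟩ := exists_norm_fderiv_puncture_le x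
  refine ⟨C * (A * ‖e‖) * (2 ^ Module.finrank ℝ E * μ.real (closedBall 0 1)), fun r hr => ?_⟩
  set c := C * r ^ (-p) * (r⁻¹ * A * ‖e‖)
  have hbound : ∀ z, ‖F z * fderiv ℝ (puncture x r) z e‖ ≤
      (closedBall x (2 * r)).indicator (fun _ => c) z := fun z => by
    by_cases hz : ‖z - x‖ < r ∨ 2 * r < ‖z - x‖
    · rw [fderiv_puncture_eq_zero hr hz]
      simpa using Set.indicator_nonneg (fun _ _ => by positivity) z
    rw [not_or, not_lt, not_lt] at hz
    rw [Set.indicator_of_mem (mem_closedBall_iff_norm.2 hz.2), norm_mul]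
    have hzx : z ≠ x := sub_ne_zero.1 (norm_pos_iff.1 (hr.trans_le hz.1))
    have hFz : ‖F z‖ ≤ C * r ^ (-p) := (hF z hzx).trans <|
      mul_le_mul_of_nonneg_left (rpow_le_rpow_of_nonpos hr hz.1 (neg_nonpos.2 hp)) hC
    have hd : ‖fderiv ℝ (puncture x r) z e‖ ≤ r⁻¹ * A * ‖e‖ :=
      (ContinuousLinearMap.le_opNorm _ _).trans
        (mul_le_mul_of_nonneg_right (hA r hr z) (norm_nonneg _))
    exact mul_le_mul hFz hd (norm_nonneg _) (by positivity)
  have hi : Integrable ((closedBall x (2 * r)).indicator fun _ => c) μ :=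
    (integrable_indicator_iff measurableSet_closedBall).2
      (integrableOn_const measure_closedBall_lt_top.ne)
  refine (norm_integral_le_of_norm_le hi (.of_forall hbound)).trans_eq ?_
  rw [integral_indicator measurableSet_closedBall, setIntegral_const, smul_eq_mul,
    measureReal_def, Measure.addHaar_closedBall' _ _ (by positivity), ENNReal.toReal_mul,
    ENNReal.toReal_ofReal (by positivity), ← measureReal_def, mul_pow, sub_sub, sub_eq_add_neg,
    rpow_add hr, rpow_natCast, neg_add, rpow_add hr, rpow_neg_one]
  simp only [c]
  ring

lemma tendsto_integral_mul_fderiv_puncture {F : E → ℝ} (hC : 0 ≤ C) (hp : 0 ≤ p)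
    (hpd : p + 1 < Module.finrank ℝ E) (hF : ∀ z, z ≠ x → |F z| ≤ C * ‖z - x‖ ^ (-p)) (e : E) :
    Tendsto (fun r => ∫ z, F z * fderiv ℝ (puncture x r) z e ∂μ) (𝓝[>] 0) (𝓝 0) := by
  obtain ⟨A, hA⟩ := exists_abs_integral_mul_fderiv_puncture_le (μ := μ) hC hp hF e
  have hq : 0 < (Module.finrank ℝ E : ℝ) - p - 1 := by linarith
  refine squeeze_zero_norm' (a := fun r => A * r ^ ((Module.finrank ℝ E : ℝ) - p - 1)) ?_ ?_
  · filter_upwards [self_mem_nhdsWithin] with r hr using hA r hr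
  · have := (continuousAt_rpow_const 0 _ (Or.inr hq.le)).tendsto.const_mul A
    rw [zero_rpow hq.ne', mul_zero] at this
    exact this.mono_left nhdsWithin_le_nhds

lemma integral_mul_fderiv_mul_puncture {r : ℝ} (hr : 0 < r) (hΓi : Integrable Γ μ)
    (hΓd : ∀ z ∈ tsupport H, z ≠ x → DifferentiableAt ℝ Γ z)
    (hΓ' : Integrable (fun z => fderiv ℝ Γ z e * H z) μ) (hH : ContDiff ℝ 1 H)
    (hc : HasCompactSupport H) :
    ∫ z, Γ z * fderiv ℝ H z e * puncture x r z ∂μ =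
      -∫ z, fderiv ℝ Γ z e * H z * puncture x r z ∂μ -
        ∫ z, Γ z * H z * fderiv ℝ (puncture x r) z e ∂μ := by
  have hX : ContDiff ℝ 1 (puncture x r) := contDiff_puncture (n := 1)
  have hT : ContDiff ℝ 1 (H * puncture x r) := hH.mul hX
  have hTc : HasCompactSupport (H * puncture x r) := hc.mul_right
  have hderiv : ∀ z, fderiv ℝ (H * puncture x r) z e =
      fderiv ℝ H z e * puncture x r z + H z * fderiv ℝ (puncture x r) z e := fun z => by
    rw [fderiv_mul (hH.differentiable one_ne_zero z) (hX.differentiable one_ne_zero z)]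
    simp
    ring
  have hbdd : ∀ {k : E → ℝ}, Continuous k → HasCompactSupport k →
      Integrable (fun z => Γ z * k z) μ := fun hk hkc => by
    obtain ⟨A, hA⟩ := hkc.exists_bound_of_continuous hk
    exact hΓi.mul_bdd hk.aestronglyMeasurable (.of_forall hA)
  have hH' : Continuous fun z => fderiv ℝ H z e :=
    (hH.continuous_fderiv one_ne_zero).clm_apply continuous_const
  have hX' : Continuous fun z => fderiv ℝ (puncture x r) z e :=
    (hX.continuous_fderiv one_ne_zero).clm_apply continuous_const
  have ibp := integral_mul_fderiv_eq_neg_fderiv_mul_of_integrable (μ := μ) (f := Γ)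
    (g := H * puncture x r) (v := e) ?_
    (hbdd ((hT.continuous_fderiv one_ne_zero).clm_apply continuous_const) (hTc.fderiv_apply ℝ e))
    (hbdd hT.continuous hTc)
    (fun z hz => hΓd z (tsupport_mul_subset_left hz) fun h =>
      notMem_tsupport_puncture hr (h ▸ tsupport_mul_subset_right hz))
    (fun z _ => hT.differentiable one_ne_zero z)
  · have hadd := integral_add (μ := μ)
      (hbdd (hH'.mul hX.continuous) (hc.fderiv_apply ℝ e).mul_right)
      (hbdd (hH.continuous.mul hX') hc.mul_right)
    simp only [hderiv, mul_add, Pi.mul_apply, ← mul_assoc] at ibp hadd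
    linarith
  · simp only [Pi.mul_apply, ← mul_assoc]
    exact hΓ'.mul_bdd hX.continuous.aestronglyMeasurable (.of_forall abs_puncture_le_one)

lemma integral_mul_fderiv_eq_neg_of_isolated_singularity [Nontrivial E] (hC : 0 ≤ C) (hp : 0 ≤ p)
    (hpd : p + 1 < Module.finrank ℝ E) (hΓi : Integrable Γ μ)
    (hΓC : ∀ z, z ≠ x → |Γ z| ≤ C * ‖z - x‖ ^ (-p))
    (hΓd : ∀ z ∈ tsupport H, z ≠ x → DifferentiableAt ℝ Γ z)
    (hΓ' : Integrable (fun z => fderiv ℝ Γ z e * H z) μ) (hH : ContDiff ℝ 1 H)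
    (hc : HasCompactSupport H) :
    ∫ z, Γ z * fderiv ℝ H z e ∂μ = -∫ z, fderiv ℝ Γ z e * H z ∂μ := by
  have hH' : Continuous fun z => fderiv ℝ H z e :=
    (hH.continuous_fderiv one_ne_zero).clm_apply continuous_const
  obtain ⟨A, hA⟩ := (hc.fderiv_apply ℝ e).exists_bound_of_continuous hH'
  obtain ⟨B, hB⟩ := hc.exists_bound_of_continuous hH.continuous
  have hΓH : ∀ z, z ≠ x → |Γ z * H z| ≤ C * B * ‖z - x‖ ^ (-p) := fun z hz => by
    rw [abs_mul, mul_right_comm]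
    exact mul_le_mul (hΓC z hz) (hB z) (abs_nonneg _) (by positivity)
  have left := tendsto_integral_mul_puncture (x := x)
    (hΓi.mul_bdd hH'.aestronglyMeasurable (.of_forall hA))
  have right := (tendsto_integral_mul_puncture (x := x) hΓ').neg.sub
    (tendsto_integral_mul_fderiv_puncture (μ := μ)
      (mul_nonneg hC ((norm_nonneg _).trans (hB 0))) hp hpd hΓH e)
  rw [sub_zero] at right
  refine tendsto_nhds_unique left (right.congr' ?_)
  filter_upwards [self_mem_nhdsWithin] with r hr
  exact (integral_mul_fderiv_mul_puncture hr hΓi hΓd hΓ' hH hc).symm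

lemma abs_integral_mul_fderiv_le_of_isolated_singularity [Nontrivial E] {Ω : Set E} (hC : 0 ≤ C)
    (hp : 0 ≤ p) (hpd : p + 1 < Module.finrank ℝ E) (hΓi : Integrable Γ μ)
    (hΓC : ∀ z, z ≠ x → |Γ z| ≤ C * ‖z - x‖ ^ (-p))
    (hΓd : ∀ z ∈ Ω, z ≠ x → DifferentiableAt ℝ Γ z)
    (hΓ' : IntegrableOn (fun z => fderiv ℝ Γ z) Ω μ) (hH : ContDiff ℝ 1 H)
    (hc : HasCompactSupport H) (hHΩ : tsupport H ⊆ Ω) {B : ℝ} (hB : ∀ z, |H z| ≤ B)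
    (he : ‖e‖ ≤ 1) :
    |∫ z, Γ z * fderiv ℝ H z e ∂μ| ≤ B * ∫ z in Ω, ‖fderiv ℝ Γ z‖ ∂μ := by
  have hsupp : support (fun z => fderiv ℝ Γ z e * H z) ⊆ Ω := fun z hz =>
    hHΩ (subset_tsupport H (right_ne_zero_of_mul hz))
  have hi : IntegrableOn (fun z => fderiv ℝ Γ z e * H z) Ω μ :=
    (hΓ'.apply_continuousLinearMap e).mul_bdd hH.continuous.aestronglyMeasurable (.of_forall hB)
  rw [integral_mul_fderiv_eq_neg_of_isolated_singularity hC hp hpd hΓi hΓC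
    (fun z hz => hΓd z (hHΩ hz)) ((integrableOn_iff_integrable_of_support_subset hsupp).1 hi) hH hc,
    abs_neg, ← setIntegral_eq_integral_of_forall_compl_eq_zero (s := Ω)
      fun z hz => notMem_support.1 fun h => hz (hsupp h), ← integral_const_mul,
    ← Real.norm_eq_abs]
  refine norm_integral_le_of_norm_le (hΓ'.norm.const_mul B) (.of_forall fun z => ?_)
  rw [norm_mul, mul_comm]
  exact mul_le_mul (hB z) ((fderiv ℝ Γ z).unit_le_opNorm e he) (norm_nonneg _)
    ((abs_nonneg _).trans (hB z))

end IntegrationByParts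

section BoundaryDecay

open scoped Topology

variable {N : ℕ} {s : ℝ} {Ω : Set (Euc N)} {u : Euc N → ℝ}

lemma HasFracTrace.congr {g g' : Euc N → ℝ} (hu : HasFracTrace N s Ω u g)
    (h : Set.EqOn g' g (frontier Ω)) : HasFracTrace N s Ω u g' :=
  ⟨hu.1.congr h, fun θ hθ => h hθ ▸ hu.2 θ hθ⟩

variable [NeZero N]

lemma HasFracTrace.exists_abs_le_on_collar (hu : HasFracTrace N s Ω u 0) (ho : IsOpen Ω)
    (hb : Bornology.IsBounded Ω) {τ : ℝ} (hτ : 0 < τ) :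
    ∃ ε, 0 < ε ∧ ∀ z ∈ collar Ω ε, |u z| ≤ τ * infDist z Ωᶜ ^ s := by
  have hW : {z | z ∈ Ω → |u z| ≤ τ * infDist z Ωᶜ ^ s} ∈ 𝓝ˢ (frontier Ω) := by
    refine mem_nhdsSet_iff_forall.2 fun θ hθ => ?_
    have small := (hu.2 θ hθ).abs.eventually_lt_const (show |(0 : ℝ)| < τ by rwa [abs_zero])
    filter_upwards [eventually_nhdsWithin_iff.1 small] with z hz hzΩ
    have hd := Real.rpow_pos_of_pos (infDist_compl_pos ho hb hzΩ) s
    have := hz hzΩ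
    rw [bdist_eq_infDist_compl hb hzΩ, abs_div, abs_of_pos hd, div_lt_iff₀ hd] at this
    exact this.le
  obtain ⟨ε, hε, hεW⟩ := exists_collar_subset_of_mem_nhdsSet_frontier hb hW
  exact ⟨ε, hε, fun z hz => hεW hz (collar_subset hz)⟩

lemma HasFracTrace.exists_abs_le_add_rpow (hu : HasFracTrace N s Ω u 0) (ho : IsOpen Ω)
    (hb : Bornology.IsBounded Ω) (hu0 : ∀ z, z ∉ Ω → u z = 0) {B : ℝ} (hB : ∀ z, |u z| ≤ B)
    {t τ : ℝ} (ht : 0 ≤ t) (hτ : 0 < τ) :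
    ∃ A, 0 ≤ A ∧ ∀ z, |u z| ≤ τ * infDist z Ωᶜ ^ s + A * infDist z Ωᶜ ^ t := by
  obtain ⟨ε, hε, hsmall⟩ := hu.exists_abs_le_on_collar ho hb hτ
  have hB0 : 0 ≤ B := (abs_nonneg _).trans (hB 0)
  refine ⟨B * (ε ^ t)⁻¹, by positivity, fun z => ?_⟩
  have hd : 0 ≤ infDist z Ωᶜ := infDist_nonneg
  by_cases hz : z ∈ Ω
  · rcases le_or_gt (infDist z Ωᶜ) ε with h | h
    · exact (hsmall z ⟨hz, h⟩).trans (le_add_of_nonneg_right (by positivity))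
    · refine (hB z).trans (le_add_of_nonneg_of_le (by positivity) ?_)
      rw [mul_assoc, inv_mul_eq_div]
      exact le_mul_of_one_le_right hB0
        ((one_le_div (by positivity)).2 (Real.rpow_le_rpow hε.le h.le ht))
  · rw [hu0 z hz, abs_zero]
    positivity

end BoundaryDecay

section TruncationError

open Function
open ContinuousLinearMap (mul)
open scoped Convolution ContDiff Topology

section Dilation

variable {N : ℕ} [NeZero N] {s : ℝ} {k : Euc N → ℝ}

lemma exists_abs_fracLap_dilate_le (hs : 0 < s) (hs1 : s < 1) (hk : ContDiff ℝ 2 k)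
    (hsupp : support k ⊆ closedBall 0 1) :
    ∃ A, 0 ≤ A ∧ ∀ ρ, 0 < ρ → ∀ y,
      |fracLap N s (dilate (N + 1) k ρ) y| ≤ A * ρ⁻¹ * decayKernel (N + 2 * s) ρ y := by
  obtain ⟨A, hA0, hA⟩ := exists_abs_fracLap_le_decayKernel hs hs1 hk hsupp
  refine ⟨A, hA0, fun ρ hρ y => ?_⟩
  unfold dilate
  rw [fracLap_const_mul_comp_smul k hρ, abs_mul, abs_of_pos (by positivity),
    decayKernel_eq_smul hρ]
  calc (ρ ^ (N + 1))⁻¹ * ρ ^ (-(2 * s)) * |fracLap N s k (ρ⁻¹ • y)|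
      ≤ (ρ ^ (N + 1))⁻¹ * ρ ^ (-(2 * s)) * (A * decayKernel (N + 2 * s) 1 (ρ⁻¹ • y)) := by
        gcongr
        exact hA _
    _ = A * ρ⁻¹ * (ρ ^ (-(N + 2 * s)) * decayKernel (N + 2 * s) 1 (ρ⁻¹ • y)) := by
        rw [neg_add, Real.rpow_add hρ, Real.rpow_neg hρ.le N, Real.rpow_natCast, pow_succ, mul_inv]
        ring

lemma integrable_fracLap_dilate (hs : 0 < s) (hs1 : s < 1) (hk : ContDiff ℝ 2 k)
    (hsupp : support k ⊆ closedBall 0 1) {ρ : ℝ} (hρ : 0 < ρ) :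
    Integrable (fracLap N s (dilate (N + 1) k ρ)) := by
  obtain ⟨A, -, hA⟩ := exists_abs_fracLap_dilate_le hs hs1 hk hsupp
  exact ((integrable_decayKernel volume (by simp [hs]) hρ).const_mul _).mono'
    (measurable_fracLap (contDiff_dilate hk).continuous).aestronglyMeasurable
    (.of_forall (hA ρ hρ))

end Dilation

section InfDist

variable {E : Type*} [NormedAddCommGroup E] {S : Set E} {b r t ρ : ℝ} {z : E}

lemma infDist_rpow_mul_decayKernel_le (hb : 1 ≤ b) (hρ : 0 < ρ) (ht : 0 ≤ t)
    (hz : infDist z S ≤ b * ρ) (y : E) :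
    infDist y S ^ t * decayKernel r ρ (z - y) ≤ b ^ t * decayKernel (r - t) ρ (z - y) := by
  refine rpow_mul_decayKernel_le hρ (by positivity) infDist_nonneg ht r ?_
  have := infDist_le_infDist_add_dist (s := S) (x := y) (y := z)
  rw [dist_comm, dist_eq_norm] at this
  nlinarith [norm_nonneg (z - y)]

variable [NormedSpace ℝ E] [FiniteDimensional ℝ E] [MeasurableSpace E] [BorelSpace E]
  (μ : Measure E) [μ.IsAddHaarMeasure]

lemma integrable_infDist_rpow_mul_decayKernel (hb : 1 ≤ b) (hρ : 0 < ρ) (ht : 0 ≤ t)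
    (hr : Module.finrank ℝ E + t < r) (hz : infDist z S ≤ b * ρ) :
    Integrable (fun y => infDist y S ^ t * decayKernel r ρ (z - y)) μ := by
  have hd : Continuous fun y => infDist y S ^ t :=
    (continuous_infDist_pt S).rpow_const fun _ => Or.inr ht
  refine (((integrable_decayKernel μ (r := r - t) (by linarith) hρ).comp_sub_left z).const_mul
    (b ^ t)).mono' ?_ (.of_forall fun y => ?_)
  · exact (hd.mul ((continuous_decayKernel hρ r).comp
      (continuous_const.sub continuous_id))).aestronglyMeasurable
  · rw [Real.norm_of_nonneg (mul_nonneg (Real.rpow_nonneg infDist_nonneg _)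
      (decayKernel_nonneg hρ _ _))]
    exact infDist_rpow_mul_decayKernel_le hb hρ ht hz y

lemma integral_infDist_rpow_mul_decayKernel_le (hb : 1 ≤ b) (hρ : 0 < ρ) (ht : 0 ≤ t)
    (hr : Module.finrank ℝ E + t < r) (hz : infDist z S ≤ b * ρ) :
    ∫ y, infDist y S ^ t * decayKernel r ρ (z - y) ∂μ ≤
      b ^ t * (∫ y, decayKernel (r - t) 1 y ∂μ) * ρ ^ (Module.finrank ℝ E + t - r) := by
  calc ∫ y, infDist y S ^ t * decayKernel r ρ (z - y) ∂μ
      ≤ ∫ y, b ^ t * decayKernel (r - t) ρ (z - y) ∂μ :=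
        integral_mono (integrable_infDist_rpow_mul_decayKernel μ hb hρ ht hr hz)
          (((integrable_decayKernel μ (by linarith) hρ).comp_sub_left z).const_mul _)
          (infDist_rpow_mul_decayKernel_le hb hρ ht hz)
    _ = b ^ t * (∫ y, decayKernel (r - t) 1 y ∂μ) * ρ ^ (Module.finrank ℝ E + t - r) := by
        rw [integral_const_mul, integral_sub_left_eq_self (decayKernel (r - t) ρ),
          integral_decayKernel μ _ hρ, show (Module.finrank ℝ E : ℝ) - (r - t) =
          Module.finrank ℝ E + t - r by ring]
        ring

variable {μ}

lemma abs_convolution_le_of_abs_le_infDist_rpow {w Q : E → ℝ} {c q T₁ T₂ : ℝ} (hb : 1 ≤ b)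
    (hρ : 0 < ρ) (hc : 0 ≤ c) (ht : 0 ≤ t) (hq : 0 ≤ q) (htr : Module.finrank ℝ E + t < r)
    (hqr : Module.finrank ℝ E + q < r)
    (hw : ∀ y, |w y| ≤ T₁ * infDist y S ^ t + T₂ * infDist y S ^ q)
    (hQ : ∀ y, |Q y| ≤ c * decayKernel r ρ y) (hT₁ : 0 ≤ T₁) (hT₂ : 0 ≤ T₂)
    (hz : infDist z S ≤ b * ρ) :
    |(w ⋆[mul ℝ ℝ, μ] Q) z| ≤
      c * (T₁ * (b ^ t * (∫ y, decayKernel (r - t) 1 y ∂μ) * ρ ^ (Module.finrank ℝ E + t - r)) +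
        T₂ * (b ^ q * (∫ y, decayKernel (r - q) 1 y ∂μ) * ρ ^ (Module.finrank ℝ E + q - r))) := by
  have it := (integrable_infDist_rpow_mul_decayKernel μ hb hρ ht htr hz).const_mul T₁
  have iq := (integrable_infDist_rpow_mul_decayKernel μ hb hρ hq hqr hz).const_mul T₂
  rw [convolution_def, ← Real.norm_eq_abs]
  refine (norm_integral_le_of_norm_le ((it.add iq).const_mul c) (.of_forall fun y => ?_)).trans ?_
  · rw [ContinuousLinearMap.mul_apply', norm_mul, mul_comm, Pi.add_apply]
    calc |Q (z - y)| * |w y| ≤ c * decayKernel r ρ (z - y) *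
          (T₁ * infDist y S ^ t + T₂ * infDist y S ^ q) :=
          mul_le_mul (hQ _) (hw y) (abs_nonneg _) (mul_nonneg hc (decayKernel_nonneg hρ _ _))
      _ = _ := by ring
  · simp only [Pi.add_apply]
    rw [integral_const_mul, integral_add it iq, integral_const_mul, integral_const_mul]
    gcongr
    · exact integral_infDist_rpow_mul_decayKernel_le μ hb hρ ht htr hz
    · exact integral_infDist_rpow_mul_decayKernel_le μ hb hρ hq hqr hz

end InfDist

section Core

variable {E : Type*} [NormedAddCommGroup E] [MeasurableSpace E] [BorelSpace E]
  {μ : Measure E} [μ.IsAddLeftInvariant] [μ.IsNegInvariant] {Ω : Set E} {z : E}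

lemma abs_convolution_indicator_core_sub_le {u Q P : E → ℝ} {a T : ℝ} (hΩ : MeasurableSet Ω)
    (hu0 : ∀ y, y ∉ Ω → u y = 0) (huT : ∀ y ∈ collar Ω a, |u y| ≤ T)
    (hQP : ∀ y, |Q y| ≤ P y) (hP : Integrable P μ)
    (hi : Integrable (fun y => u y * Q (z - y)) μ) :
    |((core Ω a).indicator u ⋆[mul ℝ ℝ, μ] Q) z - (u ⋆[mul ℝ ℝ, μ] Q) z| ≤
      T * ∫ y in collar Ω a, P (z - y) ∂μ := by
  have split := integral_add_compl (isOpen_core (Ω := Ω) (ρ := a)).measurableSet hi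
  have hcollar : ∫ y in (core Ω a)ᶜ, u y * Q (z - y) ∂μ = ∫ y in collar Ω a, u y * Q (z - y) ∂μ :=
    setIntegral_eq_of_subset_of_forall_sdiff_eq_zero isOpen_core.measurableSet.compl
      (fun y hy => not_lt.2 hy.2) fun y hy => by
        rw [hu0 y fun h => hy.2 ⟨h, not_lt.1 hy.1⟩, zero_mul]
  have hcore : ((core Ω a).indicator u ⋆[mul ℝ ℝ, μ] Q) z =
      ∫ y in core Ω a, u y * Q (z - y) ∂μ := by
    rw [convolution_def, ← integral_indicator isOpen_core.measurableSet]
    simp only [ContinuousLinearMap.mul_apply', Set.indicator_mul_left]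
  have hfull : (u ⋆[mul ℝ ℝ, μ] Q) z = ∫ y, u y * Q (z - y) ∂μ := rfl
  rw [hcore, hfull, ← split, hcollar, sub_add_cancel_left, abs_neg, ← integral_const_mul,
    ← Real.norm_eq_abs]
  refine norm_integral_le_of_norm_le ((hP.comp_sub_left z).integrableOn.const_mul T) ?_
  filter_upwards [ae_restrict_mem (measurableSet_collar hΩ)] with y hy
  rw [norm_mul]
  exact mul_le_mul (huT y hy) (hQP _) (norm_nonneg _) ((abs_nonneg _).trans (huT y hy))

lemma abs_indicator_le {X : Type*} {S Ω : Set X} {g : X → ℝ} {B : ℝ} (hS : S ⊆ Ω)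
    (hB : ∀ z ∈ Ω, |g z| ≤ B) (hB0 : 0 ≤ B) (z : X) : |S.indicator g z| ≤ B := by
  by_cases hz : z ∈ S
  · rw [Set.indicator_of_mem hz]
    exact hB z (hS hz)
  · rwa [Set.indicator_of_notMem hz, abs_zero]

end Core

variable {N : ℕ} {s ρ : ℝ} {Ω : Set (Euc N)} {g u k : Euc N → ℝ}

/-- The error of truncation: the amount by which the fractional Laplacian of the mollified
derivative `u 1_{d > 3ρ} ⋆ k_ρ`, where `k_ρ = ρ^{-N-1} k(·/ρ)` and `d` is the distance to the
complement of `Ω`, fails to be `g 1_{d > 5ρ} ⋆ k_ρ`. -/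
def truncationError (N : ℕ) (s : ℝ) (Ω : Set (Euc N)) (g u k : Euc N → ℝ) (ρ : ℝ) (z : Euc N) :
    ℝ :=
  ((core Ω (3 * ρ)).indicator u ⋆[mul ℝ ℝ] fracLap N s (dilate (N + 1) k ρ)) z -
    ((core Ω (5 * ρ)).indicator g ⋆[mul ℝ ℝ] dilate (N + 1) k ρ) z

lemma IsDistribSolution.convolution_fracLap_eq {a : ℝ} (hu : IsDistribSolution N s Ω g u)
    (ho : IsOpen Ω) (ha : 0 ≤ a) (hk : ContDiff ℝ ∞ k) (hsupp : support k ⊆ closedBall 0 ρ)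
    {z : Euc N} (hz : z ∈ core Ω (a + ρ)) :
    (u ⋆[mul ℝ ℝ] fracLap N s k) z = ((core Ω a).indicator g ⋆[mul ℝ ℝ] k) z := by
  have hball : closedBall z ρ ⊆ core Ω a := closedBall_subset_core hz
  have hzsupp : support (fun y => k (z - y)) ⊆ closedBall z ρ := fun y hy => by
    simpa [dist_eq_norm, norm_sub_rev] using hsupp hy
  have hφ : IsTestFn N Ω fun y => k (z - y) :=
    ⟨hk.comp (contDiff_const.sub contDiff_id),
      .of_support_subset_isCompact (isCompact_closedBall z ρ) hzsupp,
      (closure_minimal hzsupp isClosed_closedBall).trans (hball.trans (core_subset ha))⟩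
  calc (u ⋆[mul ℝ ℝ] fracLap N s k) z = ∫ y, u y * fracLap N s (fun y => k (z - y)) y := by
        simp only [fracLap_comp_sub_left]
        rfl
    _ = ∫ y, Ω.indicator g y * k (z - y) := by
        rw [hu.2.2 _ hφ, ← integral_indicator ho.measurableSet]
        simp only [Set.indicator_mul_left]
    _ = (Ω.indicator g ⋆[mul ℝ ℝ] k) z := rfl
    _ = ((core Ω a).indicator g ⋆[mul ℝ ℝ] k) z := by
        rw [convolution_indicator_eq hsupp hball,
          convolution_indicator_eq hsupp (hball.trans (core_subset ha))]

variable [NeZero N]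

lemma IsDistribSolution.exists_abs_truncationError_le_of_mem_core
    (hu : IsDistribSolution N s Ω g u) (hs : 0 < s) (hs1 : s < 1) (ho : IsOpen Ω)
    (hb : Bornology.IsBounded Ω) (hu0 : HasFracTrace N s Ω u 0) (hk : ContDiff ℝ ∞ k)
    (hsupp : support k ⊆ closedBall 0 1) :
    ∃ A, 0 ≤ A ∧ ∀ τ, 0 < τ → ∀ᶠ ρ in 𝓝[>] 0, ∀ z ∈ core Ω (6 * ρ),
      |truncationError N s Ω g u k ρ z| ≤
        A * τ * ρ ^ (s - 1) * ∫ y in collar Ω (3 * ρ), decayKernel (N + 2 * s) ρ (z - y) := by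
  have hk2 : ContDiff ℝ 2 k := hk.of_le (by norm_cast)
  obtain ⟨A, hA0, hA⟩ := exists_abs_fracLap_dilate_le hs hs1 hk2 hsupp
  obtain ⟨B, hB⟩ := (hu.hasCompactSupport hb).exists_bound_of_continuous hu.1
  refine ⟨3 ^ s * A, by positivity, fun τ hτ => ?_⟩
  obtain ⟨ε, hε, hsmall⟩ := hu0.exists_abs_le_on_collar ho hb hτ
  filter_upwards [Ioo_mem_nhdsGT (show 0 < ε / 3 by positivity)] with ρ ⟨hρ, hρε⟩ z hz
  have hcollar : ∀ y ∈ collar Ω (3 * ρ), |u y| ≤ τ * (3 * ρ) ^ s := fun y hy => by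
    refine (hsmall y ⟨hy.1, hy.2.trans (by linarith)⟩).trans ?_
    have := Real.rpow_le_rpow infDist_nonneg hy.2 hs.le
    gcongr
  rw [truncationError, ← hu.convolution_fracLap_eq ho (by positivity) (contDiff_dilate hk)
    (support_dilate_subset hρ hsupp) (by rwa [show 5 * ρ + ρ = 6 * ρ by ring])]
  refine (abs_convolution_indicator_core_sub_le ho.measurableSet hu.2.1 hcollar (hA ρ hρ)
    ((integrable_decayKernel volume (by simp [hs]) hρ).const_mul _)
    (((integrable_fracLap_dilate hs hs1 hk2 hsupp hρ).comp_sub_left z).bdd_mul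
      hu.1.aestronglyMeasurable (.of_forall hB))).trans_eq ?_
  rw [integral_const_mul, Real.mul_rpow zero_le_three hρ.le, Real.rpow_sub_one hρ.ne']
  ring

lemma IsDistribSolution.exists_abs_truncationError_le_add_rpow
    (hu : IsDistribSolution N s Ω g u) (hs : 0 < s) (hs1 : s < 1) (ho : IsOpen Ω)
    (hb : Bornology.IsBounded Ω) (hu0 : HasFracTrace N s Ω u 0) {B : ℝ}
    (hB : ∀ z ∈ Ω, |g z| ≤ B) (hB0 : 0 ≤ B) (hk : ContDiff ℝ 2 k)
    (hsupp : support k ⊆ closedBall 0 1) :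
    ∃ A, 0 ≤ A ∧ ∀ τ, 0 < τ → ∃ D₁ D₂, ∀ ρ, 0 < ρ → ∀ z ∈ collar Ω (6 * ρ),
      |truncationError N s Ω g u k ρ z| ≤
        (A * τ + D₁ * ρ ^ (s / 2) + D₂ * ρ ^ s) * ρ ^ (-1 - s) := by
  obtain ⟨A, hA0, hA⟩ := exists_abs_fracLap_dilate_le hs hs1 hk hsupp
  obtain ⟨M, hM⟩ := (hu.hasCompactSupport hb).exists_bound_of_continuous hu.1
  set I : ℝ → ℝ := fun t => 6 ^ t * ∫ y : Euc N, decayKernel (N + 2 * s - t) 1 y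
  have hI0 : 0 ≤ I s :=
    mul_nonneg (by positivity) (integral_nonneg fun y => decayKernel_nonneg one_pos _ y)
  refine ⟨A * I s, by positivity, fun τ hτ => ?_⟩
  obtain ⟨T, hT0, hT⟩ := hu0.exists_abs_le_add_rpow ho hb hu.2.1 hM (t := 3 * s / 2)
    (by positivity) hτ
  refine ⟨A * T * I (3 * s / 2), B * ∫ y, |k y|, fun ρ hρ z hz => ?_⟩
  have hu_part := abs_convolution_le_of_abs_le_infDist_rpow (μ := volume) (b := 6) (t := s)
    (q := 3 * s / 2) (r := N + 2 * s) (S := Ωᶜ) (w := (core Ω (3 * ρ)).indicator u)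
    (by norm_num) hρ (c := A * ρ⁻¹) (by positivity) hs.le (by positivity) (by simp [hs])
    (by simp; linarith) (fun y => (norm_indicator_le_norm_self u y).trans (hT y)) (hA ρ hρ)
    hτ.le hT0 hz.2
  have hg_part := abs_convolution_le (μ := volume) (k := dilate (N + 1) k ρ)
    ((contDiff_dilate hk).continuous.integrable_of_hasCompactSupport
      (hasCompactSupport_of_support_subset_closedBall (support_dilate_subset hρ hsupp)))
    (abs_indicator_le (core_subset (ρ := 5 * ρ) (by positivity)) hB hB0) z
  have pow_t : ∀ t : ℝ, ρ⁻¹ * ρ ^ (N + t - (N + 2 * s)) = ρ ^ (t - s) * ρ ^ (-1 - s) := fun t => by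
    rw [← Real.rpow_neg_one, ← Real.rpow_add hρ, ← Real.rpow_add hρ]
    ring_nf
  have pow_N : (ρ ^ (N + 1))⁻¹ * ρ ^ N = ρ ^ s * ρ ^ (-1 - s) := by
    rw [← Real.rpow_add hρ, pow_succ, show s + (-1 - s) = -1 by ring, Real.rpow_neg_one]
    field_simp
  rw [integral_abs_dilate volume _ _ hρ, finrank_euclideanSpace_fin, pow_N] at hg_part
  rw [finrank_euclideanSpace_fin] at hu_part
  refine (abs_sub _ _).trans ((add_le_add hu_part hg_part).trans_eq ?_)
  have pow_s := pow_t s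
  have pow_q := pow_t (3 * s / 2)
  rw [sub_self, Real.rpow_zero, one_mul] at pow_s
  rw [show 3 * s / 2 - s = s / 2 by ring] at pow_q
  linear_combination A * τ * I s * pow_s + A * T * I (3 * s / 2) * pow_q

lemma tendsto_rpow_nhdsGT_zero {q : ℝ} (hq : 0 < q) :
    Tendsto (fun ρ : ℝ => ρ ^ q) (𝓝[>] 0) (𝓝 0) :=
  tendsto_nhdsWithin_of_tendsto_nhds
    (by simpa [hq.ne'] using (Real.continuousAt_rpow_const 0 q (Or.inr hq.le)).tendsto)

lemma IsDistribSolution.exists_abs_truncationError_le_of_mem_collar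
    (hu : IsDistribSolution N s Ω g u) (hs : 0 < s) (hs1 : s < 1) (ho : IsOpen Ω)
    (hb : Bornology.IsBounded Ω) (hu0 : HasFracTrace N s Ω u 0) {B : ℝ}
    (hB : ∀ z ∈ Ω, |g z| ≤ B) (hB0 : 0 ≤ B) (hk : ContDiff ℝ 2 k)
    (hsupp : support k ⊆ closedBall 0 1) :
    ∃ A, 0 ≤ A ∧ ∀ τ, 0 < τ → ∀ᶠ ρ in 𝓝[>] 0, ∀ z ∈ collar Ω (6 * ρ),
      |truncationError N s Ω g u k ρ z| ≤ A * τ * ρ ^ (-1 - s) := by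
  obtain ⟨A, hA0, hA⟩ := hu.exists_abs_truncationError_le_add_rpow hs hs1 ho hb hu0 hB hB0 hk hsupp
  refine ⟨A + 1, by positivity, fun τ hτ => ?_⟩
  obtain ⟨D₁, D₂, hD⟩ := hA τ hτ
  have lower_order : Tendsto (fun ρ : ℝ => D₁ * ρ ^ (s / 2) + D₂ * ρ ^ s) (𝓝[>] 0) (𝓝 0) := by
    simpa using ((tendsto_rpow_nhdsGT_zero (half_pos hs)).const_mul D₁).add
      ((tendsto_rpow_nhdsGT_zero hs).const_mul D₂)
  filter_upwards [self_mem_nhdsWithin, lower_order.eventually_le_const hτ] with ρ hρ hlow z hz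
  refine (hD ρ hρ z hz).trans ?_
  have := Real.rpow_nonneg (le_of_lt hρ) (-1 - s)
  gcongr
  linarith

end TruncationError

section GreenFunctions

open scoped Topology

section Fubini

variable {E : Type*} [NormedAddCommGroup E] [SecondCountableTopology E] [MeasurableSpace E]
  [BorelSpace E] {μ ν : Measure E} [IsFiniteMeasure ν] {Γ : E → ℝ} {r ρ : ℝ}

lemma integrable_mul_decayKernel_prod (hΓ : Integrable Γ μ) (hr : 0 ≤ r) (hρ : 0 < ρ) :
    Integrable (fun p : E × E => Γ p.1 * decayKernel r ρ (p.1 - p.2)) (μ.prod ν) := by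
  refine (hΓ.comp_fst ν).mul_bdd (c := ρ ^ (-r)) ((continuous_decayKernel hρ r).comp
    (continuous_fst.sub continuous_snd)).aestronglyMeasurable (.of_forall fun p => ?_)
  rw [Real.norm_of_nonneg (decayKernel_nonneg hρ _ _)]
  exact Real.rpow_le_rpow_of_nonpos hρ (le_add_of_nonneg_right (norm_nonneg _)) (neg_nonpos.2 hr)

lemma integrable_mul_integral_decayKernel [SFinite μ] (hΓ : Integrable Γ μ) (hr : 0 ≤ r)
    (hρ : 0 < ρ) :
    Integrable (fun z => Γ z * ∫ y, decayKernel r ρ (z - y) ∂ν) μ := by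
  simp_rw [← integral_const_mul]
  exact (integrable_mul_decayKernel_prod hΓ hr hρ).integral_prod_left

lemma integral_mul_integral_decayKernel [SFinite μ] (hΓ : Integrable Γ μ) (hr : 0 ≤ r)
    (hρ : 0 < ρ) :
    ∫ z, Γ z * ∫ y, decayKernel r ρ (z - y) ∂ν ∂μ =
      ∫ y, ∫ z, Γ z * decayKernel r ρ (z - y) ∂μ ∂ν := by
  simp_rw [← integral_const_mul]
  exact integral_integral_swap (integrable_mul_decayKernel_prod hΓ hr hρ)

end Fubini

variable {N : ℕ} {s C : ℝ} {Ω : Set (Euc N)} {x : Euc N} {Γ : Euc N → ℝ}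

lemma IsGreenFn.abs_le (hΓ : IsGreenFn N s Ω C x Γ) {z : Euc N} (hz : z ≠ x) :
    |Γ z| ≤ |C| * ‖z - x‖ ^ (-(N - 2 * s)) := by
  obtain ⟨hpos, hle⟩ := hΓ.2.2.2 z hz
  rw [abs_of_nonneg hpos, neg_sub, norm_sub_rev]
  have : 0 ≤ bdist N Ω x := infDist_nonneg
  have : 0 ≤ bdist N Ω z := infDist_nonneg
  exact hle.trans (mul_le_mul (le_abs_self C) (min_le_left _ _) (by positivity) (abs_nonneg C))

variable [NeZero N]

lemma IsGreenFn.ae_nonneg (hΓ : IsGreenFn N s Ω C x Γ) : ∀ᵐ z, 0 ≤ Γ z := by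
  filter_upwards [volume.ae_ne x] with z hz using (hΓ.2.2.2 z hz).1

lemma IsGreenFn.norm_integral_mul_le (hΓ : IsGreenFn N s Ω C x Γ) (hΩ : MeasurableSet Ω)
    {F S : Euc N → ℝ} {a p q : ℝ} (hp : 0 ≤ p) (hq : 0 ≤ q) (hS : ∀ z, 0 ≤ S z)
    (hi : Integrable fun z => Γ z * S z) (hcore : ∀ z ∈ core Ω a, |F z| ≤ p * S z)
    (hcollar : ∀ z ∈ collar Ω a, |F z| ≤ q) :
    ‖∫ z, Γ z * F z‖ ≤ p * (∫ z, Γ z * S z) + q * ∫ z in collar Ω a, Γ z := by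
  have hm := measurableSet_collar (ρ := a) hΩ
  have i₁ := hi.const_mul p
  have i₂ := (hΓ.1.indicator hm).const_mul q
  rw [← integral_indicator hm, ← integral_const_mul, ← integral_const_mul, ← integral_add i₁ i₂]
  refine norm_integral_le_of_norm_le (i₁.add i₂) ?_
  filter_upwards [hΓ.ae_nonneg] with z hz
  have hSz := hS z
  have hind : 0 ≤ (collar Ω a).indicator Γ z := Set.indicator_apply_nonneg fun _ => hz
  rw [norm_mul, Real.norm_of_nonneg hz, Real.norm_eq_abs]
  by_cases hzΩ : z ∈ Ω
  · rcases le_or_gt (infDist z Ωᶜ) a with h | h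
    · rw [Set.indicator_of_mem (show z ∈ collar Ω a from ⟨hzΩ, h⟩), mul_comm q]
      exact le_add_of_nonneg_of_le (by positivity)
        (mul_le_mul_of_nonneg_left (hcollar z ⟨hzΩ, h⟩) hz)
    · refine le_add_of_le_of_nonneg ?_ (by positivity)
      rw [mul_left_comm]
      exact mul_le_mul_of_nonneg_left (hcore z h) hz
  · rw [hΓ.2.1 z hzΩ, zero_mul]
    positivity

lemma IsGreenFn.exists_le_infDist_rpow (hΓ : IsGreenFn N s Ω C x Γ)
    (hb : Bornology.IsBounded Ω) (hx : x ∈ Ω) {r : ℝ} (hr : 0 < r) :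
    ∃ A, 0 ≤ A ∧ ∀ z, r ≤ ‖z - x‖ → Γ z ≤ A * infDist z Ωᶜ ^ s := by
  have hdx : 0 ≤ infDist x Ωᶜ := infDist_nonneg
  refine ⟨|C| * (infDist x Ωᶜ ^ s * r ^ (-N : ℝ)), by positivity, fun z hz => ?_⟩
  have hdz : 0 ≤ infDist z Ωᶜ := infDist_nonneg
  by_cases hzΩ : z ∈ Ω
  · have hzx : z ≠ x := sub_ne_zero.1 (norm_pos_iff.1 (hr.trans_le hz))
    have far : ‖x - z‖ ^ (-N : ℝ) ≤ r ^ (-N : ℝ) := by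
      rw [norm_sub_rev]
      exact Real.rpow_le_rpow_of_nonpos hr hz (by simp)
    calc Γ z ≤ |C| * (infDist x Ωᶜ ^ s * infDist z Ωᶜ ^ s * ‖x - z‖ ^ (-N : ℝ)) := by
          rw [← bdist_eq_infDist_compl hb hx, ← bdist_eq_infDist_compl hb hzΩ] at *
          exact (hΓ.2.2.2 z hzx).2.trans
            (mul_le_mul (le_abs_self C) (min_le_right _ _) (by positivity) (abs_nonneg C))
      _ ≤ |C| * (infDist x Ωᶜ ^ s * infDist z Ωᶜ ^ s * r ^ (-N : ℝ)) := by gcongr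
      _ = |C| * (infDist x Ωᶜ ^ s * r ^ (-N : ℝ)) * infDist z Ωᶜ ^ s := by ring
  · rw [hΓ.2.1 z hzΩ]
    positivity

lemma IsGreenFn.exists_setIntegral_collar_le (hΓ : IsGreenFn N s Ω C x Γ) (hs : 0 ≤ s)
    (ho : IsOpen Ω) (hb : Bornology.IsBounded Ω) (hV : HasLinearCollarVolume Ω) (hx : x ∈ Ω) :
    ∃ A, 0 ≤ A ∧ ∃ r, 0 < r ∧ ∀ ρ, 0 < ρ → ρ < r → ∫ z in collar Ω ρ, Γ z ≤ A * ρ ^ (s + 1) := by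
  obtain ⟨V, hV⟩ := hV
  have hV0 : 0 ≤ V := by simpa using measureReal_nonneg.trans (hV 1 one_pos)
  have hdx := infDist_compl_pos ho hb hx
  obtain ⟨A, hA0, hA⟩ := hΓ.exists_le_infDist_rpow hb hx (half_pos hdx)
  refine ⟨A * V, by positivity, infDist x Ωᶜ / 2, half_pos hdx, fun ρ hρ hρx => ?_⟩
  have bound : ∀ z ∈ collar Ω ρ, ‖Γ z‖ ≤ A * ρ ^ s := fun z hz => by
    have := infDist_le_infDist_add_dist (s := Ωᶜ) (x := x) (y := z)
    have far : infDist x Ωᶜ / 2 ≤ ‖z - x‖ := by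
      rw [← dist_eq_norm, dist_comm]
      linarith [hz.2]
    have hzx : z ≠ x := sub_ne_zero.1 (norm_pos_iff.1 ((half_pos hdx).trans_le far))
    rw [Real.norm_of_nonneg (hΓ.2.2.2 z hzx).1]
    exact (hA z far).trans
      (mul_le_mul_of_nonneg_left (Real.rpow_le_rpow infDist_nonneg hz.2 hs) hA0)
  calc ∫ z in collar Ω ρ, Γ z ≤ A * ρ ^ s * volume.real (collar Ω ρ) :=
        (Real.le_norm_self _).trans (norm_setIntegral_le_of_norm_le_const
          (hb.subset collar_subset).measure_lt_top bound)
    _ ≤ A * ρ ^ s * (V * ρ) := by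
        have := hV ρ hρ
        gcongr
    _ = A * V * ρ ^ (s + 1) := by
        rw [Real.rpow_add_one hρ.ne']
        ring

lemma IsGreenFn.exists_mul_decayKernel_le (hΓ : IsGreenFn N s Ω C x Γ) (ho : IsOpen Ω)
    (hb : Bornology.IsBounded Ω) (hx : x ∈ Ω) {q : ℝ} (hq : 0 ≤ q) :
    ∃ A, 0 ≤ A ∧ ∃ A', 0 ≤ A' ∧ ∀ᶠ ρ in 𝓝[>] 0, ∀ y ∈ collar Ω (3 * ρ), ∀ z, z ≠ x →
      Γ z * decayKernel q ρ (z - y) ≤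
        A * (infDist z Ωᶜ ^ s * decayKernel q ρ (y - z)) + A' * Γ z := by
  obtain ⟨r, hr, hrx⟩ : ∃ r, 0 < r ∧ infDist x Ωᶜ = 4 * r :=
    ⟨infDist x Ωᶜ / 4, by have := infDist_compl_pos ho hb hx; positivity, by ring⟩
  obtain ⟨A, hA0, hA⟩ := hΓ.exists_le_infDist_rpow hb hx hr
  refine ⟨A, hA0, r ^ (-q), by positivity, ?_⟩
  filter_upwards [Ioo_mem_nhdsGT (show 0 < 2 * r / 3 by positivity)] with ρ ⟨hρ, hρr⟩ y hy z hz
  have hΓz := (hΓ.2.2.2 z hz).1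
  have hk := decayKernel_nonneg hρ q (y - z)
  have hsymm : decayKernel q ρ (z - y) = decayKernel q ρ (y - z) := by
    simp only [decayKernel, norm_sub_rev]
  have hd : 0 ≤ infDist z Ωᶜ := infDist_nonneg
  rw [hsymm]
  rcases le_or_gt r ‖z - x‖ with far | near
  · refine le_add_of_le_of_nonneg ?_ (by positivity)
    rw [← mul_assoc]
    exact mul_le_mul_of_nonneg_right (hA z far) hk
  · refine le_add_of_nonneg_of_le (by positivity) ?_
    rw [mul_comm]
    refine mul_le_mul_of_nonneg_right (Real.rpow_le_rpow_of_nonpos hr ?_ (neg_nonpos.2 hq)) hΓz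
    have hxy := infDist_le_infDist_add_dist (s := Ωᶜ) (x := x) (y := y)
    have htri := dist_triangle_left x y z
    rw [← dist_eq_norm] at near
    rw [← dist_eq_norm, dist_comm]
    linarith [hy.2]

lemma IsGreenFn.exists_norm_integral_mul_decayKernel_le (hΓ : IsGreenFn N s Ω C x Γ)
    (hs : 0 < s) (ho : IsOpen Ω) (hb : Bornology.IsBounded Ω) (hx : x ∈ Ω) :
    ∃ A, 0 ≤ A ∧ ∀ᶠ ρ in 𝓝[>] 0, ∀ y ∈ collar Ω (3 * ρ),
      ‖∫ z, Γ z * decayKernel (N + 2 * s) ρ (z - y)‖ ≤ A * ρ ^ (-s) := by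
  obtain ⟨A, hA0, A', hA'0, hA⟩ :=
    hΓ.exists_mul_decayKernel_le ho hb hx (show 0 ≤ N + 2 * s by positivity)
  have hmass : 0 ≤ ∫ z, Γ z := integral_nonneg_of_ae hΓ.ae_nonneg
  have hker : 0 ≤ ∫ y : Euc N, decayKernel (N + 2 * s - s) 1 y :=
    integral_nonneg fun y => decayKernel_nonneg one_pos _ y
  refine ⟨A * (3 ^ s * ∫ y : Euc N, decayKernel (N + 2 * s - s) 1 y) + A' * ∫ z, Γ z,
    by positivity, ?_⟩
  filter_upwards [Ioc_mem_nhdsGT one_pos, hA] with ρ ⟨hρ, hρ1⟩ hAρ y hy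
  have hfin : (Module.finrank ℝ (Euc N) : ℝ) + s < N + 2 * s := by
    rw [finrank_euclideanSpace_fin]
    linarith
  have i₁ := (integrable_infDist_rpow_mul_decayKernel volume (by norm_num) hρ hs.le hfin
    hy.2).const_mul A
  have i₂ := hΓ.1.const_mul A'
  have far := integral_infDist_rpow_mul_decayKernel_le volume (by norm_num) hρ hs.le hfin hy.2
  rw [finrank_euclideanSpace_fin, show N + s - (N + 2 * s) = -s by ring] at far
  calc ‖∫ z, Γ z * decayKernel (N + 2 * s) ρ (z - y)‖
      ≤ ∫ z, A * (infDist z Ωᶜ ^ s * decayKernel (N + 2 * s) ρ (y - z)) + A' * Γ z := by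
        refine norm_integral_le_of_norm_le (i₁.add i₂) ?_
        filter_upwards [volume.ae_ne x] with z hz
        rw [Real.norm_of_nonneg (mul_nonneg (hΓ.2.2.2 z hz).1 (decayKernel_nonneg hρ _ _))]
        exact hAρ y hy z hz
    _ ≤ A * (3 ^ s * (∫ y : Euc N, decayKernel (N + 2 * s - s) 1 y) * ρ ^ (-s)) +
          A' * ((∫ z, Γ z) * ρ ^ (-s)) := by
        rw [integral_add i₁ i₂, integral_const_mul, integral_const_mul]
        gcongr
        exact le_mul_of_one_le_right (by positivity)
          (Real.one_le_rpow_of_pos_of_le_one_of_nonpos hρ hρ1 (neg_nonpos.2 hs.le))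
    _ = _ := by ring

lemma IsGreenFn.exists_integral_mul_setIntegral_decayKernel_le (hΓ : IsGreenFn N s Ω C x Γ)
    (hs : 0 < s) (ho : IsOpen Ω) (hb : Bornology.IsBounded Ω) (hV : HasLinearCollarVolume Ω)
    (hx : x ∈ Ω) :
    ∃ A, 0 ≤ A ∧ ∀ᶠ ρ in 𝓝[>] 0,
      ∫ z, Γ z * ∫ y in collar Ω (3 * ρ), decayKernel (N + 2 * s) ρ (z - y) ≤
        A * ρ ^ (1 - s) := by
  obtain ⟨V, hV⟩ := hV
  have hV0 : 0 ≤ V := by simpa using measureReal_nonneg.trans (hV 1 one_pos)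
  obtain ⟨A, hA0, hA⟩ := hΓ.exists_norm_integral_mul_decayKernel_le hs ho hb hx
  refine ⟨3 * A * V, by positivity, ?_⟩
  filter_upwards [self_mem_nhdsWithin, hA] with ρ hρ hAρ
  rw [Set.mem_Ioi] at hρ
  have hfin : volume (collar Ω (3 * ρ)) < ⊤ := (hb.subset collar_subset).measure_lt_top
  have : IsFiniteMeasure (volume.restrict (collar Ω (3 * ρ))) := ⟨by simpa using hfin⟩
  rw [integral_mul_integral_decayKernel hΓ.1 (by positivity) hρ]
  calc ∫ y in collar Ω (3 * ρ), ∫ z, Γ z * decayKernel (N + 2 * s) ρ (z - y)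
      ≤ A * ρ ^ (-s) * volume.real (collar Ω (3 * ρ)) :=
        (Real.le_norm_self _).trans (norm_setIntegral_le_of_norm_le_const hfin hAρ)
    _ ≤ A * ρ ^ (-s) * (V * (3 * ρ)) := by
        have := hV (3 * ρ) (by positivity)
        gcongr
    _ = 3 * A * V * ρ ^ (1 - s) := by
        rw [sub_eq_neg_add, Real.rpow_add_one hρ.ne']
        ring

end GreenFunctions

section Representation

open Function
open ContinuousLinearMap (mul)
open scoped Convolution ContDiff Topology

variable {N : ℕ} {s C a ρ B : ℝ} {Ω : Set (Euc N)} {x e : Euc N} {Γ g u w k κ : Euc N → ℝ}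

lemma isTestFn_convolution (hb : Bornology.IsBounded Ω) (hw : LocallyIntegrable w)
    (hwa : support w ⊆ core Ω a) (hk : ContDiff ℝ ∞ k) (hsupp : support k ⊆ closedBall 0 ρ)
    (hρa : ρ < a) : IsTestFn N Ω (w ⋆[mul ℝ ℝ] k) := by
  have hclosed : IsClosed {z : Euc N | a - ρ ≤ infDist z Ωᶜ} :=
    isClosed_le continuous_const (continuous_infDist_pt _)
  have hsub : support (w ⋆[mul ℝ ℝ] k) ⊆ {z : Euc N | a - ρ ≤ infDist z Ωᶜ} :=
    (support_convolution_subset_core hwa hsupp).trans fun z (hz : a - ρ < infDist z Ωᶜ) => hz.le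
  have htsupp : tsupport (w ⋆[mul ℝ ℝ] k) ⊆ Ω := (closure_minimal hsub hclosed).trans fun z hz =>
    mem_of_dist_lt_infDist_compl ((dist_self z).trans_lt ((sub_pos.2 hρa).trans_le hz))
  exact ⟨(hasCompactSupport_of_support_subset_closedBall hsupp).contDiff_convolution_right _ hw hk,
    isCompact_of_isClosed_isBounded (isClosed_tsupport _) (hb.subset htsupp), htsupp⟩

variable [NeZero N]

lemma IsGreenFn.integral_mul_convolution_fracLap (hΓ : IsGreenFn N s Ω C x Γ) (hs : 0 < s)
    (hs1 : s < 1) (hb : Bornology.IsBounded Ω) (hw : Integrable w) (hwa : support w ⊆ core Ω a)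
    (hk : ContDiff ℝ ∞ k) (hsupp : support k ⊆ closedBall 0 ρ) (hρa : ρ < a) :
    ∫ z, Γ z * (w ⋆[mul ℝ ℝ] fracLap N s k) z = (w ⋆[mul ℝ ℝ] k) x := by
  rw [← hΓ.2.2.1 _ (isTestFn_convolution hb hw.locallyIntegrable hwa hk hsupp hρa),
    fracLap_convolution hs hs1 (hk.of_le (by norm_cast))
      (hasCompactSupport_of_support_subset_closedBall hsupp) hw]
  exact (setIntegral_eq_integral_of_forall_compl_eq_zero fun z hz => by
    rw [hΓ.2.1 z hz, zero_mul]).symm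

lemma IsGreenFn.abs_integral_mul_convolution_dilate_fderiv_le (hΓ : IsGreenFn N s Ω C x Γ)
    (hs : 1 / 2 < s) (hN : 2 * s < N) (hb : Bornology.IsBounded Ω)
    (hΓd : ∀ z ∈ Ω, z ≠ x → DifferentiableAt ℝ Γ z)
    (hΓ' : IntegrableOn (fun z => fderiv ℝ Γ z) Ω) (hw : LocallyIntegrable w)
    (hwa : support w ⊆ core Ω a) (hwB : ∀ z, |w z| ≤ B) (hκ : ContDiff ℝ ∞ κ)
    (hκ1 : support κ ⊆ closedBall 0 1) (hκ0 : ∀ z, 0 ≤ κ z) (hκi : ∫ z, κ z = 1) (hρ : 0 < ρ)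
    (hρa : ρ < a) (he : ‖e‖ ≤ 1) :
    |∫ z, Γ z * (w ⋆[mul ℝ ℝ] dilate (N + 1) (fun v => fderiv ℝ κ v e) ρ) z| ≤
      B * ∫ z in Ω, ‖fderiv ℝ Γ z‖ := by
  have hK : ContDiff ℝ ∞ (dilate N κ ρ) := contDiff_dilate hκ
  have hKsupp := support_dilate_subset (m := N) hρ hκ1
  have hKc := hasCompactSupport_of_support_subset_closedBall hKsupp
  have hK1 : ContDiff ℝ 1 (dilate N κ ρ) := hK.of_le (by norm_cast)
  obtain ⟨hφ, hφc, hφΩ⟩ := isTestFn_convolution hb hw hwa hK hKsupp hρa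
  have hderiv : ∀ z, fderiv ℝ (w ⋆[mul ℝ ℝ] dilate N κ ρ) z e =
      (w ⋆[mul ℝ ℝ] dilate (N + 1) (fun v => fderiv ℝ κ v e) ρ) z := fun z => by
    rw [fderiv_convolution_apply hw hK1 hKc]
    simp only [fderiv_dilate_apply (hκ.differentiable (by simp))]
  have hmass : ∫ y, |dilate N κ ρ y| = 1 := by
    simp only [integral_abs_dilate volume _ _ hρ, abs_of_nonneg (hκ0 _), hκi,
      finrank_euclideanSpace_fin]
    field_simp
  have hbound : ∀ z, |(w ⋆[mul ℝ ℝ] dilate N κ ρ) z| ≤ B := fun z => by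
    simpa only [hmass, mul_one] using
      abs_convolution_le (μ := volume) (hK.continuous.integrable_of_hasCompactSupport hKc) hwB z
  simp only [← hderiv]
  exact abs_integral_mul_fderiv_le_of_isolated_singularity (abs_nonneg C) (by linarith)
    (by rw [finrank_euclideanSpace_fin]; linarith) hΓ.1 (fun z hz => hΓ.abs_le hz) hΓd hΓ'
    (hφ.of_le (by norm_cast)) hφc hφΩ hbound he

lemma IsGreenFn.convolution_dilate_eq_add (hΓ : IsGreenFn N s Ω C x Γ) (hs : 0 < s)
    (hs1 : s < 1) (hb : Bornology.IsBounded Ω) (hu : IsDistribSolution N s Ω g u)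
    (hg : IntegrableOn g Ω) (hgB : ∀ z ∈ Ω, |g z| ≤ B) (hB0 : 0 ≤ B) (hk : ContDiff ℝ ∞ k)
    (hsupp : support k ⊆ closedBall 0 1) (hρ : 0 < ρ) (hx : x ∈ core Ω (3 * ρ + ρ)) :
    (u ⋆[mul ℝ ℝ] dilate (N + 1) k ρ) x =
      (∫ z, Γ z * ((core Ω (5 * ρ)).indicator g ⋆[mul ℝ ℝ] dilate (N + 1) k ρ) z) +
        ∫ z, Γ z * truncationError N s Ω g u k ρ z := by
  have hK : ContDiff ℝ ∞ (dilate (N + 1) k ρ) := contDiff_dilate hk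
  have hKsupp := support_dilate_subset (m := N + 1) hρ hsupp
  have hKc := hasCompactSupport_of_support_subset_closedBall hKsupp
  obtain ⟨M, hM⟩ := (hu.hasCompactSupport hb).exists_bound_of_continuous hu.1
  have hui : Integrable ((core Ω (3 * ρ)).indicator u) :=
    (hu.1.integrable_of_hasCompactSupport (hu.hasCompactSupport hb)).indicator
      isOpen_core.measurableSet
  have hgi : Integrable ((core Ω (5 * ρ)).indicator g) :=
    (hg.mono_set (core_subset (by positivity))).integrable_indicator isOpen_core.measurableSet
  have iu := integrable_mul_convolution hΓ.1 hui
    (fun z => (norm_indicator_le_norm_self u z).trans (hM z))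
    (integrable_fracLap_dilate hs hs1 (hk.of_le (by norm_cast)) hsupp hρ)
  have ig := integrable_mul_convolution hΓ.1 hgi
    (abs_indicator_le (core_subset (by positivity)) hgB hB0)
    (hK.continuous.integrable_of_hasCompactSupport hKc)
  have repr := hΓ.integral_mul_convolution_fracLap hs hs1 hb hui Set.support_indicator_subset
    hK hKsupp (by linarith)
  rw [convolution_indicator_eq hKsupp (closedBall_subset_core hx)] at repr
  simp only [truncationError, mul_sub]
  rw [integral_sub iu ig, repr]
  ring

lemma IsGreenFn.exists_norm_integral_mul_truncationError_le (hΓ : IsGreenFn N s Ω C x Γ)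
    (hs : 0 < s) (hs1 : s < 1) (ho : IsOpen Ω) (hb : Bornology.IsBounded Ω)
    (hV : HasLinearCollarVolume Ω) (hx : x ∈ Ω) (hu : IsDistribSolution N s Ω g u)
    (hu0 : HasFracTrace N s Ω u 0) (hgB : ∀ z ∈ Ω, |g z| ≤ B) (hB0 : 0 ≤ B)
    (hk : ContDiff ℝ ∞ k) (hsupp : support k ⊆ closedBall 0 1) :
    ∃ A, 0 ≤ A ∧ ∀ τ, 0 < τ → ∀ᶠ ρ in 𝓝[>] 0,
      ‖∫ z, Γ z * truncationError N s Ω g u k ρ z‖ ≤ A * τ := by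
  obtain ⟨A₁, hA₁0, hA₁⟩ := hu.exists_abs_truncationError_le_of_mem_core hs hs1 ho hb hu0 hk hsupp
  obtain ⟨A₂, hA₂0, hA₂⟩ := hu.exists_abs_truncationError_le_of_mem_collar hs hs1 ho hb hu0 hgB hB0
    (hk.of_le (by norm_cast)) hsupp
  obtain ⟨A₃, hA₃0, hA₃⟩ := hΓ.exists_integral_mul_setIntegral_decayKernel_le hs ho hb hV hx
  obtain ⟨A₄, hA₄0, r, hr, hA₄⟩ := hΓ.exists_setIntegral_collar_le hs.le ho hb hV hx
  refine ⟨A₁ * A₃ + A₂ * (A₄ * 6 ^ (s + 1)), by positivity, fun τ hτ => ?_⟩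
  filter_upwards [Ioo_mem_nhdsGT (show 0 < r / 6 by positivity), hA₁ τ hτ, hA₂ τ hτ, hA₃] with
    ρ ⟨hρ, hρr⟩ hcore hcollar hΓcore
  have hfin : volume (collar Ω (3 * ρ)) < ⊤ := (hb.subset collar_subset).measure_lt_top
  have : IsFiniteMeasure (volume.restrict (collar Ω (3 * ρ))) := ⟨by simpa using hfin⟩
  have hi := integrable_mul_integral_decayKernel (ν := volume.restrict (collar Ω (3 * ρ))) hΓ.1
    (show 0 ≤ N + 2 * s by positivity) hρ
  calc ‖∫ z, Γ z * truncationError N s Ω g u k ρ z‖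
      ≤ A₁ * τ * ρ ^ (s - 1) *
          (∫ z, Γ z * ∫ y in collar Ω (3 * ρ), decayKernel (N + 2 * s) ρ (z - y)) +
        A₂ * τ * ρ ^ (-1 - s) * ∫ z in collar Ω (6 * ρ), Γ z :=
        hΓ.norm_integral_mul_le ho.measurableSet (by positivity) (by positivity)
          (fun z => integral_nonneg fun y => decayKernel_nonneg hρ _ _) hi hcore hcollar
    _ ≤ A₁ * τ * ρ ^ (s - 1) * (A₃ * ρ ^ (1 - s)) +
        A₂ * τ * ρ ^ (-1 - s) * (A₄ * (6 * ρ) ^ (s + 1)) := by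
        gcongr
        exact hA₄ (6 * ρ) (by positivity) (by linarith)
    _ = (A₁ * A₃ + A₂ * (A₄ * 6 ^ (s + 1))) * τ := by
        have h₁ : ρ ^ (s - 1) * ρ ^ (1 - s) = 1 := by
          rw [← Real.rpow_add hρ, sub_add_sub_cancel, sub_self, Real.rpow_zero]
        have h₂ : ρ ^ (-1 - s) * ρ ^ (s + 1) = 1 := by
          rw [← Real.rpow_add hρ, show -1 - s + (s + 1) = 0 by ring, Real.rpow_zero]
        rw [Real.mul_rpow (by norm_num) hρ.le]
        linear_combination A₁ * τ * A₃ * h₁ + A₂ * τ * A₄ * 6 ^ (s + 1) * h₂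

lemma IsGreenFn.tendsto_integral_mul_truncationError (hΓ : IsGreenFn N s Ω C x Γ)
    (hs : 0 < s) (hs1 : s < 1) (ho : IsOpen Ω) (hb : Bornology.IsBounded Ω)
    (hV : HasLinearCollarVolume Ω) (hx : x ∈ Ω) (hu : IsDistribSolution N s Ω g u)
    (hu0 : HasFracTrace N s Ω u 0) (hgB : ∀ z ∈ Ω, |g z| ≤ B) (hB0 : 0 ≤ B)
    (hk : ContDiff ℝ ∞ k) (hsupp : support k ⊆ closedBall 0 1) :
    Tendsto (fun ρ => ∫ z, Γ z * truncationError N s Ω g u k ρ z) (𝓝[>] 0) (𝓝 0) := by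
  obtain ⟨A, hA0, hA⟩ := hΓ.exists_norm_integral_mul_truncationError_le hs hs1 ho hb hV hx hu hu0
    hgB hB0 hk hsupp
  refine Metric.tendsto_nhds.2 fun ε hε => ?_
  filter_upwards [hA (ε / (A + 1)) (by positivity)] with ρ hρ
  rw [dist_zero_right]
  refine hρ.trans_lt ?_
  rw [← mul_div_assoc, div_lt_iff₀ (by positivity)]
  linarith

lemma IsGreenFn.abs_fderiv_apply_le (hΓ : IsGreenFn N s Ω C x Γ) (hs : 1 / 2 < s) (hs1 : s < 1)
    (hN : 2 * s < N) (ho : IsOpen Ω) (hb : Bornology.IsBounded Ω)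
    (hV : HasLinearCollarVolume Ω) (hx : x ∈ Ω) (hu : IsDistribSolution N s Ω g u)
    (hg : IntegrableOn g Ω) (hgB : ∀ z ∈ Ω, |g z| ≤ B) (hu0 : HasFracTrace N s Ω u 0)
    (hux : DifferentiableAt ℝ u x) (hΓd : ∀ z ∈ Ω, z ≠ x → DifferentiableAt ℝ Γ z)
    (hΓ' : IntegrableOn (fun z => fderiv ℝ Γ z) Ω) (he : ‖e‖ ≤ 1) :
    |fderiv ℝ u x e| ≤ B * ∫ z in Ω, ‖fderiv ℝ Γ z‖ := by
  have hs0 : 0 < s := by linarith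
  have hB0 : 0 ≤ B := (abs_nonneg _).trans (hgB x hx)
  obtain ⟨κ, hκ, hκ1, hκ0, hκi⟩ := exists_mollifier (E := Euc N) volume
  have hk : ContDiff ℝ ∞ fun v => fderiv ℝ κ v e :=
    (hκ.fderiv_right (m := ∞) (by norm_cast)).clm_apply contDiff_const
  have hsupp := support_fderiv_apply_subset isClosed_closedBall hκ1 e
  have mollified := tendsto_convolution_dilate_fderiv (μ := volume)
    (hκ.of_le (by norm_cast)) hκ1 hκi hux hu.1 e
  rw [finrank_euclideanSpace_fin] at mollified
  have lim := (mollified.sub (hΓ.tendsto_integral_mul_truncationError hs0 hs1 ho hb hV hx hu hu0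
    hgB hB0 hk hsupp)).abs
  rw [sub_zero] at lim
  refine le_of_tendsto lim ?_
  have hdx := infDist_compl_pos ho hb hx
  filter_upwards [Ioo_mem_nhdsGT (show 0 < infDist x Ωᶜ / 4 by positivity)] with ρ ⟨hρ, hρx⟩
  rw [hΓ.convolution_dilate_eq_add hs0 hs1 hb hu hg hgB hB0 hk hsupp hρ
    (show 3 * ρ + ρ < infDist x Ωᶜ by linarith), add_sub_cancel_right]
  exact hΓ.abs_integral_mul_convolution_dilate_fderiv_le hs hN hb hΓd hΓ'
    ((hg.mono_set (core_subset (by positivity))).integrable_indicator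
      isOpen_core.measurableSet).locallyIntegrable
    Set.support_indicator_subset (abs_indicator_le (core_subset (by positivity)) hgB hB0) hκ hκ1
    hκ0 hκi hρ (by linarith) he

end Representation

section MainTheorem

variable {N : ℕ} {s : ℝ} {Ω : Set (Euc N)} {u : Euc N → ℝ}

lemma neZero_of_two_mul_lt (hs : 0 ≤ s) (hN : 2 * s < N) : NeZero N :=
  ⟨fun h => by rw [h, Nat.cast_zero] at hN; linarith⟩

theorem IsGreenFn.norm_fderiv_le {x : Euc N} {Γ g : Euc N → ℝ} {C B : ℝ}
    (hΓ : IsGreenFn N s Ω C x Γ) (hs : 1 / 2 < s) (hs1 : s < 1) (hN : 2 * s < N) (ho : IsOpen Ω)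
    (hb : Bornology.IsBounded Ω) (hV : HasLinearCollarVolume Ω) (hx : x ∈ Ω)
    (hu : IsDistribSolution N s Ω g u) (hg : IntegrableOn g Ω) (hgB : ∀ z ∈ Ω, |g z| ≤ B)
    (hu0 : HasFracTrace N s Ω u 0) (hux : DifferentiableAt ℝ u x)
    (hΓd : ∀ z ∈ Ω, z ≠ x → DifferentiableAt ℝ Γ z)
    (hΓ' : IntegrableOn (fun z => fderiv ℝ Γ z) Ω) :
    ‖fderiv ℝ u x‖ ≤ B * ∫ z in Ω, ‖fderiv ℝ Γ z‖ := by
  have : NeZero N := neZero_of_two_mul_lt (by linarith) hN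
  have hB : 0 ≤ B := (abs_nonneg _).trans (hgB x hx)
  exact ContinuousLinearMap.opNorm_le_of_unit_norm (by positivity) fun e he =>
    hΓ.abs_fderiv_apply_le hs hs1 hN ho hb hV hx hu hg hgB hu0 hux hΓd hΓ' he.le

theorem statement2_general (hs : 1 / 2 < s) (hs1 : s < 1) (hN : 2 * s < N) (ho : IsOpen Ω)
    (hb : Bornology.IsBounded Ω) (hV : HasLinearCollarVolume Ω) {f : Euc N → ℝ → ℝ}
    (hf : Continuous fun p : Euc N × ℝ => f p.1 p.2)
    (hu : IsDistribSolution N s Ω (fun z => f z (u z)) u) (hu0 : HasFracTrace N s Ω u 0)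
    (hudiff : ∀ x ∈ Ω, DifferentiableAt ℝ u x) {G : Euc N → Euc N → ℝ} {C : Euc N → ℝ}
    (hG : ∀ x ∈ Ω, IsGreenFn N s Ω (C x) x (G x))
    (hGdiff : ∀ x ∈ Ω, ∀ z ∈ Ω, z ≠ x → DifferentiableAt ℝ (G x) z)
    (hGgradInt : ∀ x ∈ Ω, IntegrableOn (fun z => fderiv ℝ (G x) z) Ω)
    (hGgradBdd : ∃ M : ℝ, ∀ x ∈ Ω, (∫ z in Ω, ‖fderiv ℝ (G x) z‖) ≤ M) :
    ∃ M : ℝ, ∀ x ∈ Ω, ‖fderiv ℝ u x‖ ≤ M := by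
  have hg : ContinuousOn (fun z => f z (u z)) (closure Ω) :=
    (hf.comp (continuous_id.prodMk hu.1)).continuousOn
  obtain ⟨B, hB⟩ := hb.isCompact_closure.exists_bound_of_continuousOn hg
  obtain ⟨M, hM⟩ := hGgradBdd
  refine ⟨|B| * M, fun x hx => ?_⟩
  calc ‖fderiv ℝ u x‖ ≤ |B| * ∫ z in Ω, ‖fderiv ℝ (G x) z‖ :=
        (hG x hx).norm_fderiv_le hs hs1 hN ho hb hV hx hu
          ((hg.integrableOn_compact hb.isCompact_closure).mono_set subset_closure)
          (fun z hz => (hB z (subset_closure hz)).trans (le_abs_self B)) hu0 (hudiff x hx)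
          (hGdiff x hx) (hGgradInt x hx)
    _ ≤ |B| * M := mul_le_mul_of_nonneg_left (hM x hx) (abs_nonneg B)

lemma LocHolder.continuous {X : Type*} [PseudoEMetricSpace X] {β : ℝ} {f : X → ℝ}
    (hf : LocHolder β f) (hβ : 0 < β) : Continuous f :=
  continuous_iff_continuousAt.2 fun p => by
    obtain ⟨t, ht, K, hK⟩ := hf p
    exact (hK.continuousOn (Real.toNNReal_pos.2 hβ)).continuousAt ht

end MainTheorem

/-- global Lipschitz bound for solutions of the overdetermined problem,
case `2s > 1`. -/
theorem statement2
    (s : ℝ) (hs : 1 / 2 < s) (hs1 : s < 1)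
    (N : ℕ) (hN : 2 * s < N)
    (Ω : Set (Euc N)) (hΩ : IsC11 N Ω)
    (β : ℝ) (hβ0 : 0 < β) (hβ1 : β < 1)
    (f : Euc N → ℝ → ℝ) (hf : LocHolder β (fun p : Euc N × ℝ => f p.1 p.2))
    (u : Euc N → ℝ) (hu : IsWeakSolution N s Ω f u)
    (hudiff : ∀ x ∈ Ω, DifferentiableAt ℝ u x)
    (G : Euc N → Euc N → ℝ) (C : ℝ)
    (hG : ∀ x ∈ Ω, IsGreenFn N s Ω C x (G x))
    (hGdiff : ∀ x ∈ Ω, ∀ z ∈ Ω, z ≠ x → DifferentiableAt ℝ (G x) z)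
    (hGgradInt : ∀ x ∈ Ω, IntegrableOn (fun z => fderiv ℝ (G x) z) Ω)
    (hGgradBdd : ∃ M : ℝ, ∀ x ∈ Ω, (∫ z in Ω, ‖fderiv ℝ (G x) z‖) ≤ M)
    (gu : Euc N → ℝ) (hgu : HasFracTrace N s Ω u gu)
    (gG : Euc N → Euc N → ℝ) (hgG : ∀ x ∈ Ω, HasFracTrace N s Ω (G x) (gG x))
    (hgu0 : ∀ θ ∈ frontier Ω, gu θ = 0) :
    ∃ M : ℝ, ∀ x ∈ Ω, ‖fderiv ℝ u x‖ ≤ M := by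
  have : NeZero N := neZero_of_two_mul_lt (by linarith) hN
  exact statement2_general hs hs1 hN hΩ.1 hΩ.2.1 hΩ.hasLinearCollarVolume (hf.continuous hβ0)
    (hu.isDistribSolution (by linarith) hs1 hΩ.2.1) (hgu.congr fun θ hθ => (hgu0 θ hθ).symm)
    hudiff hG hGdiff hGgradInt hGgradBdd
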